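/- arXiv:2203.04620 — 2 statements merged into one kernel-verified Lean document; each statement's English description precedes it below -/
import Mathlib

section
/- Let P be a Gorenstein polytope of dimension d and degree s. If d ≥ 3s, then P is a lattice pyramid. -/
open Pointwise

/-- A point of `ℝ^d` is a lattice point if all its coordinates are integers. -/
def IsLatticePt {d : ℕ} (x : Fin d → ℝ) : Prop := ∀ i, ∃ z : ℤ, x i = (z : ℝ)

/-- A lattice polytope is the (non-empty) convex hull of finitely many lattice points. -/
def IsLatticePolytope {d : ℕ} (P : Set (Fin d → ℝ)) : Prop :=
  ∃ V : Finset (Fin d → ℝ), V.Nonempty ∧ (∀ v ∈ V, IsLatticePt v) ∧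
    P = convexHull ℝ (V : Set (Fin d → ℝ))

/-- The dimension of a polytope: the dimension of the direction of its affine hull. -/
noncomputable def polyDim {d : ℕ} (P : Set (Fin d → ℝ)) : ℕ :=
  Module.finrank ℝ (affineSpan ℝ P).direction

/-- A polytope is hollow if its relative interior contains no lattice point. -/
def IsHollow {d : ℕ} (P : Set (Fin d → ℝ)) : Prop :=
  ∀ x ∈ intrinsicInterior ℝ P, ¬ IsLatticePt x

/-- A facet of `P`: a non-empty exposed face of dimension `dim P - 1`. -/
def IsFacet {d : ℕ} (P F : Set (Fin d → ℝ)) : Prop :=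
  IsExposed ℝ P F ∧ F.Nonempty ∧ polyDim F + 1 = polyDim P

/-- An affine functional is integral on `P` if it takes integer values on all
lattice points of the affine hull of `P`. -/
def IsIntegralOn {d : ℕ} (P : Set (Fin d → ℝ)) (u : (Fin d → ℝ) →ᵃ[ℝ] ℝ) : Prop :=
  ∀ y ∈ affineSpan ℝ P, IsLatticePt y → ∃ z : ℤ, u y = (z : ℝ)

/-- `P` is reflexive: there is a lattice point `x` in the relative interior of `P`
such that every facet of `P` has lattice distance one from `x`, i.e. for every facet `F`
there is an integral affine functional that is constant on `F` and exceeds its value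
at `x` by exactly `1`. -/
def IsReflexivePolytope {d : ℕ} (P : Set (Fin d → ℝ)) : Prop :=
  ∃ x ∈ intrinsicInterior ℝ P, IsLatticePt x ∧
    ∀ F : Set (Fin d → ℝ), IsFacet P F →
      ∃ u : (Fin d → ℝ) →ᵃ[ℝ] ℝ, IsIntegralOn P u ∧ ∀ f ∈ F, u f = u x + 1

/-- `P` is Gorenstein if some positive integer multiple `r • P` is reflexive. -/
def IsGorenstein {d : ℕ} (P : Set (Fin d → ℝ)) : Prop :=
  ∃ r : ℕ, 0 < r ∧ IsReflexivePolytope ((r : ℝ) • P)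

/-- `P` is Gorenstein of codegree `r` if `r • P` is reflexive (`r` positive). -/
def IsGorensteinOfCodeg {d : ℕ} (P : Set (Fin d → ℝ)) (r : ℕ) : Prop :=
  0 < r ∧ IsReflexivePolytope ((r : ℝ) • P)

/-- The codegree of `P`: the smallest positive integer `r` such that `r • P` is not hollow. -/
noncomputable def polyCodeg {d : ℕ} (P : Set (Fin d → ℝ)) : ℕ :=
  sInf {r : ℕ | 0 < r ∧ ¬ IsHollow ((r : ℝ) • P)}

/-- The degree of `P`: `dim P + 1 - codeg P`. -/
noncomputable def polyDeg {d : ℕ} (P : Set (Fin d → ℝ)) : ℕ :=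
  polyDim P + 1 - polyCodeg P

/-- Unimodular equivalence of lattice polytopes: an affine map carrying `P` onto `Q`,
with an affine inverse on affine hulls, such that both maps preserve lattice points of
the affine hulls. -/
def LatticeIso {d e : ℕ} (P : Set (Fin d → ℝ)) (Q : Set (Fin e → ℝ)) : Prop :=
  ∃ (f : (Fin d → ℝ) →ᵃ[ℝ] (Fin e → ℝ)) (g : (Fin e → ℝ) →ᵃ[ℝ] (Fin d → ℝ)),
    f '' P = Q ∧ g '' Q = P ∧
    (∀ x ∈ affineSpan ℝ P, g (f x) = x) ∧ (∀ y ∈ affineSpan ℝ Q, f (g y) = y) ∧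
    (∀ x ∈ affineSpan ℝ P, IsLatticePt x → IsLatticePt (f x)) ∧
    (∀ y ∈ affineSpan ℝ Q, IsLatticePt y → IsLatticePt (g y))

/-- The lattice pyramid `conv(P' × {0}, (0,1))` over `P' ⊆ ℝ^m`. -/
def pyramidOver {m : ℕ} (P' : Set (Fin m → ℝ)) : Set (Fin (m + 1) → ℝ) :=
  convexHull ℝ ((fun x => Fin.snoc x (0 : ℝ)) '' P' ∪ {Fin.snoc (0 : Fin m → ℝ) (1 : ℝ)})

/-- `P` is a lattice pyramid if it is a single lattice point or is isomorphic to a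
lattice pyramid over a lattice polytope. -/
def IsLatticePyramid {d : ℕ} (P : Set (Fin d → ℝ)) : Prop :=
  (∃ x : Fin d → ℝ, IsLatticePt x ∧ P = {x}) ∨
  ∃ (m : ℕ) (P' : Set (Fin m → ℝ)), IsLatticePolytope P' ∧ LatticeIso P (pyramidOver P')

/-- The Cayley polytope `P_1 * ⋯ * P_l ⊆ ℝ^{n+l}` of `P_1, …, P_l ⊆ ℝ^n`:
the convex hull of the sets `P_i × {e_i}`. -/
def cayley {n l : ℕ} (P : Fin l → Set (Fin n → ℝ)) : Set (Fin (n + l) → ℝ) :=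
  convexHull ℝ (⋃ i : Fin l, (fun x => Fin.append x (Pi.single i (1 : ℝ))) '' P i)

/-- The Cayley polytope `F * G ⊆ ℝ^{n+2}` of two polytopes `F, G ⊆ ℝ^n`. -/
def cayleyTwo {n : ℕ} (F G : Set (Fin n → ℝ)) : Set (Fin (n + 2) → ℝ) :=
  convexHull ℝ
    ((fun x => Fin.append x ![(1 : ℝ), 0]) '' F ∪ (fun x => Fin.append x ![(0 : ℝ), 1]) '' G)

/-- `P` is a Cayley join of `F` and `G` if `P ≅ F * G` and `dim F + dim G = dim P - 1`. -/
def IsCayleyJoin {d n : ℕ} (P : Set (Fin d → ℝ)) (F G : Set (Fin n → ℝ)) : Prop :=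
  LatticeIso P (cayleyTwo F G) ∧ polyDim F + polyDim G + 1 = polyDim P

/-- `P` is reducible with factors `F` and `G`: a Cayley join with
`codeg F + codeg G = codeg P`. -/
def IsReducibleWith {d n : ℕ} (P : Set (Fin d → ℝ)) (F G : Set (Fin n → ℝ)) : Prop :=
  IsCayleyJoin P F G ∧ polyCodeg F + polyCodeg G = polyCodeg P

/-- `P` is reducible: it is a single lattice point (by convention) or is reducible
with some factors `F` and `G` which are lattice polytopes. -/
def IsReducible {d : ℕ} (P : Set (Fin d → ℝ)) : Prop :=
  (∃ x : Fin d → ℝ, IsLatticePt x ∧ P = {x}) ∨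
  ∃ (n : ℕ) (F G : Set (Fin n → ℝ)), IsLatticePolytope F ∧ IsLatticePolytope G ∧
    IsReducibleWith P F G

/-- `P` is a Cayley polytope: a single lattice point, or isomorphic to a Cayley polytope
of `l > 1` lattice polytopes. -/
def IsCayleyPolytope {d : ℕ} (P : Set (Fin d → ℝ)) : Prop :=
  (∃ x : Fin d → ℝ, IsLatticePt x ∧ P = {x}) ∨
  ∃ (n l : ℕ) (Q : Fin l → Set (Fin n → ℝ)), 1 < l ∧ (∀ i, IsLatticePolytope (Q i)) ∧
    LatticeIso P (cayley Q)

/-- `P` is IDP if for every `k ≥ 2` every lattice point of `k • P` is a sum of `k`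
lattice points of `P`. -/
def IsIDP {d : ℕ} (P : Set (Fin d → ℝ)) : Prop :=
  ∀ k : ℕ, 2 ≤ k → ∀ x : Fin d → ℝ, IsLatticePt x → x ∈ (k : ℝ) • P →
    ∃ p : Fin k → (Fin d → ℝ), (∀ i, p i ∈ P ∧ IsLatticePt (p i)) ∧ x = ∑ i, p i

/-- The standard simplex `Δ_s = conv(0, e_1, …, e_s) ⊆ ℝ^s`. -/
def stdSimplexLP (s : ℕ) : Set (Fin s → ℝ) :=
  convexHull ℝ (insert 0 (Set.range fun i : Fin s => Pi.single i (1 : ℝ)))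

/-- The product of `F ⊆ ℝ^m` and `G ⊆ ℝ^n` inside `ℝ^{m+n}`. -/
def prodPoly {m n : ℕ} (F : Set (Fin m → ℝ)) (G : Set (Fin n → ℝ)) : Set (Fin (m + n) → ℝ) :=
  (fun p : (Fin m → ℝ) × (Fin n → ℝ) => Fin.append p.1 p.2) '' (F ×ˢ G)

/-- The free join `conv(F × 0 × {0} ∪ 0 × G × {1}) ⊆ ℝ^m × ℝ^n × ℝ`. -/
def freeJoin {m n : ℕ} (F : Set (Fin m → ℝ)) (G : Set (Fin n → ℝ)) :
    Set (Fin (m + n + 1) → ℝ) :=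
  convexHull ℝ
    ((fun x => Fin.snoc (Fin.append x (0 : Fin n → ℝ)) (0 : ℝ)) '' F ∪
     (fun y => Fin.snoc (Fin.append (0 : Fin m → ℝ) y) (1 : ℝ)) '' G)


lemma comb_aux {Q : Type*} [Fintype Q] [DecidableEq Q] (f : Q → Option Q)
    (hf : ∀ q, f q ≠ some q) : ∃ T : Finset Q, 2 * T.card ≤ Fintype.card Q ∧
      ∀ S : Finset Q, S.Nonempty → (∀ q ∈ S, ∃ t ∈ S, f q = some t) → ∃ t ∈ T, t ∈ S := by
  classical
  let hit : Finset Q → Prop := fun T =>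
    ∀ S : Finset Q, S.Nonempty → (∀ q ∈ S, ∃ t ∈ S, f q = some t) → ∃ t ∈ T, t ∈ S
  have hex : ∃ T, hit T := ⟨Finset.univ, fun S ⟨s, hs⟩ _ => ⟨s, Finset.mem_univ _, hs⟩⟩
  obtain ⟨T, hT, hmin⟩ := exists_minimal_of_wellFoundedLT hit hex
  refine ⟨T, ?_, hT⟩
  have h1 : ∀ t ∈ T, ∃ S : Finset Q, t ∈ S ∧ (∀ q ∈ S, ∃ t ∈ S, f q = some t) ∧
      ∀ t' ∈ T, t' ∈ S → t' = t := by
    intro t ht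
    by_contra hcon
    push Not at hcon
    have : hit (T.erase t) := by
      intro S hS hcl
      by_cases htS : t ∈ S
      · obtain ⟨t', h1, h2, h3⟩ := hcon S htS hcl
        exact ⟨t', Finset.mem_erase.2 ⟨h3, h1⟩, h2⟩
      · obtain ⟨t', h1, h2⟩ := hT S hS hcl
        refine ⟨t', Finset.mem_erase.2 ⟨?_, h1⟩, h2⟩
        rintro rfl; exact htS h2
    have := hmin this (Finset.erase_subset _ _)
    exact absurd (this ht) (by simp)
  choose! S hS1 hS2 hS3 using h1
  have h2 : ∀ t ∈ T, ∃ y, f t = some y ∧ y ∈ S t ∧ y ∉ T := by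
    intro t ht
    obtain ⟨y, hy, hfy⟩ := hS2 t ht t (hS1 t ht)
    refine ⟨y, hfy, hy, fun hyT => ?_⟩
    have := hS3 t ht y hyT hy
    subst this
    exact hf _ hfy
  choose! g hg1 hg2 hg3 using h2
  have hinj : Set.InjOn g T := by
    intro t ht t' ht' he
    have hcl : ∀ q ∈ S t ∩ S t', ∃ y ∈ S t ∩ S t', f q = some y := by
      intro q hq
      rw [Finset.mem_inter] at hq
      obtain ⟨y, hy, hfy⟩ := hS2 t ht q hq.1
      obtain ⟨y', hy', hfy'⟩ := hS2 t' ht' q hq.2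
      have : y = y' := by rw [hfy] at hfy'; exact Option.some.inj hfy'
      subst this
      exact ⟨y, Finset.mem_inter.2 ⟨hy, hy'⟩, hfy⟩
    obtain ⟨s, hs, hs'⟩ := hT (S t ∩ S t') ⟨g t, Finset.mem_inter.2 ⟨hg2 t ht, he ▸ hg2 t' ht'⟩⟩ hcl
    rw [Finset.mem_inter] at hs'
    rw [← hS3 t ht s hs hs'.1, ← hS3 t' ht' s hs hs'.2]
  have h3 : T.card ≤ (Tᶜ : Finset Q).card :=
    Finset.card_le_card_of_injOn g (fun t ht => by simpa using hg3 t ht) hinj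
  have := Finset.card_compl_add_card T
  omega

lemma basic_aux {I J : Type*} [Fintype I] [Fintype J] (A : J → I → ℝ) (b : J → ℝ) (l : I → ℝ)
    (hl : ∀ i, 0 ≤ l i) (hA : ∀ j, ∑ i, A j i * l i = b j) :
    ∃ l' : I → ℝ, (∀ i, 0 ≤ l' i) ∧ (∀ j, ∑ i, A j i * l' i = b j) ∧
      ∀ c : I → ℝ, (∀ i, l' i = 0 → c i = 0) → (∀ j, ∑ i, A j i * c i = 0) → c = 0 := by
  classical
  obtain ⟨n, hn⟩ : ∃ n, n = (Finset.univ.filter fun i => l i ≠ 0).card := ⟨_, rfl⟩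
  induction n using Nat.strong_induction_on generalizing l with
  | _ n ih =>
  by_cases hb : ∀ c : I → ℝ, (∀ i, l i = 0 → c i = 0) → (∀ j, ∑ i, A j i * c i = 0) → c = 0
  · exact ⟨l, hl, hA, hb⟩
  push Not at hb
  obtain ⟨c, hc0, hcA, hc⟩ := hb
  have key : ∀ c : I → ℝ, (∀ i, l i = 0 → c i = 0) → (∀ j, ∑ i, A j i * c i = 0) →
      (∃ i, 0 < c i) → ∃ l' : I → ℝ, (∀ i, 0 ≤ l' i) ∧ (∀ j, ∑ i, A j i * l' i = b j) ∧
      ∀ c : I → ℝ, (∀ i, l' i = 0 → c i = 0) → (∀ j, ∑ i, A j i * c i = 0) → c = 0 := by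
    intro c hc0 hcA ⟨i0, hi0⟩
    obtain ⟨k, hk, hmin⟩ := Finset.exists_min_image (Finset.univ.filter fun i => 0 < c i)
      (fun i => l i / c i) ⟨i0, by simpa using hi0⟩
    simp only [Finset.mem_filter, Finset.mem_univ, true_and] at hk hmin
    have hlk : l k ≠ 0 := fun h => by have := hc0 k h; linarith
    refine ih _ ?_ (fun i => l i - l k / c k * c i) ?_ ?_ rfl
    · rw [hn]
      apply Finset.card_lt_card
      refine ⟨fun i hi => ?_, fun hsub => ?_⟩
      · simp only [Finset.mem_filter, Finset.mem_univ, true_and] at hi ⊢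
        intro h; apply hi; rw [h, hc0 i h]; simp
      · have := hsub (show k ∈ _ by simpa using hlk)
        simp only [Finset.mem_filter, Finset.mem_univ, true_and] at this
        apply this; field_simp; simp
    · intro i
      have h0 : 0 ≤ l k / c k := div_nonneg (hl k) hk.le
      rcases lt_or_ge 0 (c i) with h | h
      · have := hmin i h
        rw [le_div_iff₀ h] at this; linarith
      · have := mul_nonneg h0 (neg_nonneg.2 h)
        have := hl i
        linarith
    · intro j
      simp only [mul_sub, Finset.sum_sub_distrib]
      rw [hA j]
      have : ∑ i, A j i * (l k / c k * c i) = l k / c k * ∑ i, A j i * c i := by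
        rw [Finset.mul_sum]; exact Finset.sum_congr rfl fun i _ => by ring
      rw [this, hcA]; simp
  obtain ⟨i, hi⟩ := Function.ne_iff.1 hc
  rcases lt_or_gt_of_ne hi with h | h
  · exact key (-c) (fun i h => by simp [hc0 i h]) (fun j => by simp [hcA j]) ⟨i, by simpa using h⟩
  · exact key c hc0 hcA ⟨i, by simpa using h⟩

lemma unit_row {I : Type*} [Fintype I] (a : I → ℕ) (l : I → ℝ) (hl : ∀ i, 0 ≤ l i)
    (hs : ∑ i, (a i : ℝ) * l i = 1) (k : I) (hk : l k = 1) (hak : 0 < a k) :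
    a k = 1 ∧ ∀ i, i ≠ k → l i ≠ 0 → a i = 0 := by
  classical
  have h0 : ∀ i ∈ Finset.univ, 0 ≤ (a i : ℝ) * l i := fun i _ => mul_nonneg (Nat.cast_nonneg _) (hl i)
  have h1 := Finset.single_le_sum h0 (Finset.mem_univ k)
  rw [hs, hk, mul_one] at h1
  have hk1 : a k = 1 := by
    have : a k ≤ 1 := by exact_mod_cast h1
    omega
  refine ⟨hk1, fun i hi hli => ?_⟩
  rw [← Finset.add_sum_erase _ _ (Finset.mem_univ k), hk1, hk] at hs
  have h2 : ∑ i ∈ Finset.univ.erase k, (a i : ℝ) * l i = 0 := by push_cast at hs; linarith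
  have h3 := (Finset.sum_eq_zero_iff_of_nonneg (fun i _ => h0 i (Finset.mem_univ _))).1 h2 i
    (Finset.mem_erase.2 ⟨hi, Finset.mem_univ _⟩)
  rcases mul_eq_zero.1 h3 with h | h
  · exact_mod_cast h
  · exact absurd h hli

lemma half_aux {I J : Type*} [Fintype I] [Fintype J] [DecidableEq I] [DecidableEq J]
    (A : J → I → ℕ) (lam lt : I → ℝ) (mu : J → ℝ)
    (hlam : ∀ i, 0 ≤ lam i) (hAl : ∀ j, ∑ i, (A j i : ℝ) * lam i = 1)
    (hlt : ∀ i, 0 < lt i) (hAt : ∀ j, ∑ i, (A j i : ℝ) * lt i = 1)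
    (hmu : ∀ j, 0 ≤ mu j) (hAm : ∀ i, ∑ j, (A j i : ℝ) * mu j = 1)
    (hbas : ∀ c : I → ℝ, (∀ i, lam i = 0 → c i = 0) → (∀ j, ∑ i, (A j i : ℝ) * c i = 0) → c = 0)
    (Q : Finset (J × I)) (hQ : ∀ q ∈ Q, lam q.2 = 1 ∧ mu q.1 = 1 ∧ A q.1 q.2 = 1)
    (hj : ∀ q ∈ Q, ∃ j', 0 < A j' q.2 ∧ ∃ v, 0 < A j' v ∧ A q.1 v = 0) :
    2 * (Finset.univ.filter fun i => lam i ≠ 0).card + Q.card ≤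
      2 * (Matrix.of fun j i => (A j i : ℝ)).rank := by
  have hj' : ∀ q : J × I, ∃ j' v, q ∈ Q → 0 < A j' q.2 ∧ 0 < A j' v ∧ A q.1 v = 0 := by
    intro q
    by_cases hq : q ∈ Q
    · obtain ⟨j', h1, v, h2, h3⟩ := hj q hq
      exact ⟨j', v, fun _ => ⟨h1, h2, h3⟩⟩
    · exact ⟨q.1, q.2, fun h => absurd h hq⟩
  choose jp vv hjpv using hj'
  have hjp1 := fun q hq => (hjpv q hq).1
  have hjp2 := fun q hq => (hjpv q hq).2.1
  have hjp3 := fun q hq => (hjpv q hq).2.2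
  -- basic facts
  have hrow1 : ∀ q ∈ Q, ∀ i, lam i ≠ 0 → A (jp q) i = A q.1 i := by
    intro q hq i hi
    obtain ⟨h1, h2⟩ := unit_row (A (jp q)) lam hlam (hAl _) q.2 (hQ q hq).1 (hjp1 q hq)
    obtain ⟨h3, h4⟩ := unit_row (A q.1) lam hlam (hAl _) q.2 (hQ q hq).1 (by rw [(hQ q hq).2.2]; simp)
    by_cases h : i = q.2
    · subst h; rw [h1, h3]
    · rw [h2 i h hi, h4 i h hi]
  have hone : ∀ q ∈ Q, ∀ v, 0 < A q.1 v → A q.1 v = 1 ∧ ∀ j, j ≠ q.1 → mu j ≠ 0 → A j v = 0 := by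
    intro q hq v hv
    exact unit_row (fun j => A j v) mu hmu (hAm v) q.1 (hQ q hq).2.1 hv
  have hfst : ∀ q ∈ Q, ∀ t ∈ Q, q.1 = t.1 → q = t := by
    intro q hq t ht h
    refine Prod.ext h ?_
    by_contra hne
    have := (unit_row (A q.1) lam hlam (hAl _) q.2 (hQ q hq).1 (by rw [(hQ q hq).2.2]; simp)).2 t.2
      (Ne.symm hne) (by rw [(hQ t ht).1]; simp)
    rw [h, (hQ t ht).2.2] at this
    omega
  have hdisj : ∀ q ∈ Q, ∀ t ∈ Q, q ≠ t → ∀ v, 0 < A q.1 v → A t.1 v = 0 := by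
    intro q hq t ht hne v hv
    exact (hone q hq v hv).2 t.1 (fun h => hne (hfst t ht q hq h).symm) (by rw [(hQ t ht).2.1]; simp)
  -- the functional graph
  let f : Q → Option Q := fun q =>
    if h : ∃ t : Q, 0 < A t.1.1 (vv q.1) then some h.choose else none
  have hf1 : ∀ q t : Q, f q = some t → 0 < A t.1.1 (vv q.1) := by
    intro q t h
    simp only [f] at h
    split_ifs at h with h'
    rw [← Option.some.inj h]; exact h'.choose_spec
  have hf2 : ∀ q t : Q, 0 < A t.1.1 (vv q.1) → f q = some t := by
    intro q t h
    have h' : ∃ t : Q, 0 < A t.1.1 (vv q.1) := ⟨t, h⟩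
    simp only [f, dif_pos h']
    congr 1
    by_contra hne
    have := hdisj _ t.2 _ h'.choose.2 (fun h => hne (Subtype.ext h.symm)) _ h
    have h2 := h'.choose_spec
    omega
  obtain ⟨T, hTc, hT⟩ := comb_aux f (fun q h => by
    have := hf1 q q h
    rw [hjp3 q.1 q.2] at this; omega)
  have Hval : ∀ (h : Q → ℝ) (t : Q) (v : I), 0 < A t.1.1 v →
      ∑ t : Q, h t * (A t.1.1 v : ℝ) = h t := by
    intro h t v hv
    rw [Finset.sum_eq_single t]
    · rw [(hone t.1 t.2 v hv).1]; simp
    · intro s _ hs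
      rw [hdisj t.1 t.2 s.1 s.2 (fun h => hs (Subtype.ext h.symm)) v hv]; simp
    · simp
  -- maximum principle
  have hmax : ∀ h : Q → ℝ, (∀ t ∈ T, h t = 0) →
      (∀ q : Q, ∑ v, lt v * ((A (jp q.1) v : ℝ) - A q.1.1 v) * (∑ t : Q, h t * (A t.1.1 v : ℝ)) = 0) →
      ∀ q, h q ≤ 0 := by
    intro h hT0 hk q
    by_contra hpos
    push Not at hpos
    obtain ⟨q0, -, hq0⟩ := Finset.exists_max_image (Finset.univ : Finset Q) h ⟨q, Finset.mem_univ _⟩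
    have hM : 0 < h q0 := lt_of_lt_of_le hpos (hq0 q (Finset.mem_univ _))
    have hHle : ∀ v, ∑ t : Q, h t * (A t.1.1 v : ℝ) ≤ h q0 := by
      intro v
      by_cases hv : ∃ t : Q, 0 < A t.1.1 v
      · obtain ⟨t, ht⟩ := hv
        rw [Hval h t v ht]; exact hq0 t (Finset.mem_univ _)
      · push Not at hv
        rw [Finset.sum_eq_zero]
        · exact hM.le
        · intro t _
          rw [Nat.le_zero.1 (hv t)]; simp
    obtain ⟨t, ht, htS⟩ := hT (Finset.univ.filter fun q => h q = h q0) ⟨q0, by simp⟩ (by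
      intro q hq
      simp only [Finset.mem_filter, Finset.mem_univ, true_and] at hq ⊢
      have hsum : ∑ v, lt v * ((A (jp q.1) v : ℝ) - A q.1.1 v) *
          (h q0 - ∑ t : Q, h t * (A t.1.1 v : ℝ)) = 0 := by
        simp only [mul_sub _ (h q0), Finset.sum_sub_distrib, hk q]
        rw [← Finset.sum_mul]
        have : ∑ v, lt v * ((A (jp q.1) v : ℝ) - A q.1.1 v) = 0 := by
          have e1 := hAt (jp q.1)
          have e2 := hAt q.1.1
          simp only [mul_sub, Finset.sum_sub_distrib]
          simp only [mul_comm (lt _)]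
          rw [e1, e2]; simp
        rw [this]; simp
      have hnn : ∀ v ∈ Finset.univ, 0 ≤ lt v * ((A (jp q.1) v : ℝ) - A q.1.1 v) *
          (h q0 - ∑ t : Q, h t * (A t.1.1 v : ℝ)) := by
        intro v _
        rcases Nat.eq_zero_or_pos (A q.1.1 v) with h0 | h0
        · rw [h0]
          have h1 := hHle v
          have h2 := hlt v
          have : (0:ℝ) ≤ A (jp q.1) v := Nat.cast_nonneg _
          exact mul_nonneg (mul_nonneg h2.le (by simp)) (by linarith)
        · rw [Hval h q v h0, hq]; simp
      have hz := (Finset.sum_eq_zero_iff_of_nonneg hnn).1 hsum (vv q.1) (Finset.mem_univ _)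
      have h1 : (0:ℝ) < A (jp q.1) (vv q.1) := by exact_mod_cast hjp2 q.1 q.2
      rw [hjp3 q.1 q.2] at hz
      have h2 := hlt (vv q.1)
      have h3 : h q0 - ∑ t : Q, h t * (A t.1.1 (vv q.1) : ℝ) = 0 := by
        rcases mul_eq_zero.1 hz with h | h
        · rcases mul_eq_zero.1 h with h | h
          · linarith
          · simp at h; exfalso; have : 0 < A (jp q.1) (vv q.1) := hjp2 q.1 q.2
            omega
        · exact h
      by_cases hv : ∃ t : Q, 0 < A t.1.1 (vv q.1)
      · obtain ⟨t, ht⟩ := hv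
        refine ⟨t, ?_, hf2 q t ht⟩
        rw [Hval h t _ ht] at h3; linarith
      · push Not at hv
        rw [Finset.sum_eq_zero] at h3
        · linarith
        · intro t _
          rw [Nat.le_zero.1 (hv t)]; simp)
    simp only [Finset.mem_filter, Finset.mem_univ, true_and] at htS
    rw [hT0 t ht] at htS
    linarith
  -- independence
  let X := {i : I // lam i ≠ 0}
  let Y := {q : Q // q ∉ T}
  let M : Matrix J I ℝ := Matrix.of fun j i => (A j i : ℝ)
  let B : Matrix I (X ⊕ Y) ℝ := Matrix.of fun v => Sum.elim
    (fun x : X => if v = x.1 then (1:ℝ) else 0) (fun t : Y => lt v * (A t.1.1.1 v : ℝ))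
  have hinj : Function.Injective (M * B).mulVecLin := by
    rw [← LinearMap.ker_eq_bot, LinearMap.ker_eq_bot']
    intro z hz
    let c : I → ℝ := fun v => if h : lam v ≠ 0 then z (Sum.inl ⟨v, h⟩) else 0
    let h : Q → ℝ := fun q => if hq : q ∉ T then z (Sum.inr ⟨q, hq⟩) else 0
    have hBz : ∀ v, (B.mulVec z) v = c v + lt v * ∑ t : Q, h t * (A t.1.1 v : ℝ) := by
      intro v
      simp only [Matrix.mulVec, dotProduct, Fintype.sum_sum_type, B, Matrix.of_apply, Sum.elim_inl,
        Sum.elim_inr]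
      congr 1
      · simp only [c]
        split_ifs with hv
        · rw [Finset.sum_eq_single ⟨v, hv⟩]
          · simp
          · intro b _ hb
            rw [if_neg (fun h => hb (Subtype.ext h.symm))]; simp
          · simp
        · apply Finset.sum_eq_zero
          intro b _
          rw [if_neg (fun h : v = b.1 => hv (by rw [h]; exact b.2))]; simp
      · rw [Finset.mul_sum]
        rw [← Fintype.sum_subtype_add_sum_subtype (fun q : Q => q ∉ T)]
        rw [add_eq_left.2]
        · refine Finset.sum_congr rfl fun t _ => ?_
          have : h t.1 = z (Sum.inr t) := by simp [h, t.2]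
          rw [this]; ring
        · apply Finset.sum_eq_zero
          rintro ⟨t, ht⟩ _
          have : h t = 0 := by simp only [h]; rw [dif_neg ht]
          simp [this]
    have hk : ∀ j, ∑ v, (A j v : ℝ) * (c v + lt v * ∑ t : Q, h t * (A t.1.1 v : ℝ)) = 0 := by
      intro j
      have := congrFun hz j
      rw [Matrix.mulVecLin_apply, ← Matrix.mulVec_mulVec] at this
      rw [Matrix.mulVec, dotProduct] at this
      simp only [hBz] at this
      exact this
    have hk2 : ∀ q : Q, ∑ v, lt v * ((A (jp q.1) v : ℝ) - A q.1.1 v) *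
        (∑ t : Q, h t * (A t.1.1 v : ℝ)) = 0 := by
      intro q
      rw [← sub_self (0:ℝ)]
      nth_rewrite 1 [← hk (jp q.1)]
      rw [← hk q.1.1, ← Finset.sum_sub_distrib]
      refine Finset.sum_congr rfl fun v _ => ?_
      by_cases hv : lam v = 0
      · have : c v = 0 := by simp [c, hv]
        rw [this]; ring
      · rw [hrow1 q.1 q.2 v hv]; ring
    have hT0 : ∀ t ∈ T, h t = 0 := fun t ht => by simp [h, ht]
    have h1 := hmax h hT0 hk2
    have h2 := hmax (-h) (fun t ht => by simp [hT0 t ht]) (fun q => by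
      have := hk2 q
      simp only [Pi.neg_apply, neg_mul, Finset.sum_neg_distrib, mul_neg, this, neg_zero])
    have h3 : ∀ q, h q = 0 := fun q => le_antisymm (h1 q) (by simpa using h2 q)
    have hc : c = 0 := hbas c (fun i hi => by simp [c, hi]) (fun j => by simpa [h3] using hk j)
    funext x
    rcases x with x | t
    · have := congrFun hc x.1
      simpa [c, x.2] using this
    · have := h3 t.1
      simpa [h, t.2] using this
  have hr1 : (M * B).rank = Fintype.card (X ⊕ Y) := by
    rw [Matrix.rank, LinearMap.finrank_range_of_inj hinj, Module.finrank_fintype_fun_eq_card]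
  have hr2 := Matrix.rank_mul_le_left M B
  rw [hr1, Fintype.card_sum] at hr2
  have hX : Fintype.card X = (Finset.univ.filter fun i => lam i ≠ 0).card := Fintype.card_subtype _
  have hY : Fintype.card Y = Q.card - T.card := by
    rw [Fintype.card_subtype_compl]; simp
  have hQc : Fintype.card Q = Q.card := Fintype.card_coe Q
  change _ ≤ 2 * M.rank
  omega

lemma matrix_main {I J : Type*} [Fintype I] [Fintype J] [DecidableEq I] [DecidableEq J]
    (A : J → I → ℕ) (lt : I → ℝ) (mt : J → ℝ)
    (hlt : ∀ i, 0 < lt i) (hAt : ∀ j, ∑ i, (A j i : ℝ) * lt i = 1)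
    (hmt : ∀ j, 0 < mt j) (hAm : ∀ i, ∑ j, (A j i : ℝ) * mt j = 1)
    (hrow : ∀ j j', (∀ v, 0 < A j' v → 0 < A j v) → j = j')
    (hcol : ∀ i i', (∀ j, 0 < A j i → 0 < A j i') → i = i')
    (r : ℕ) (hr : ∑ i, lt i = r)
    (hrank : 2 * (Matrix.of fun j i => (A j i : ℝ)).rank < 3 * r) :
    ∃ j i, A j i = 1 ∧ ∀ i', i' ≠ i → A j i' = 0 := by
  by_contra hcon
  push Not at hcon
  obtain ⟨lam, hlam, hAl, hlb⟩ := basic_aux (fun j i => (A j i : ℝ)) (fun _ => 1) lt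
    (fun i => (hlt i).le) hAt
  obtain ⟨mu, hmu, hAmu, hmb⟩ := basic_aux (fun i j => (A j i : ℝ)) (fun _ => 1) mt
    (fun i => (hmt i).le) hAm
  have hsum_mt : ∑ j, mt j = r := by
    rw [← hr]
    calc ∑ j, mt j = ∑ j, mt j * ∑ i, (A j i : ℝ) * lt i := by simp [hAt]
      _ = ∑ i, ∑ j, (A j i : ℝ) * mt j * lt i := by
        rw [Finset.sum_comm]
        refine Finset.sum_congr rfl fun j _ => ?_
        rw [Finset.mul_sum]
        exact Finset.sum_congr rfl fun i _ => by ring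
      _ = ∑ i, lt i := by
        refine Finset.sum_congr rfl fun i _ => ?_
        rw [← Finset.sum_mul, hAm, one_mul]
  have hsum_lam : ∑ i, lam i = r := by
    rw [← hsum_mt]
    calc ∑ i, lam i = ∑ i, (∑ j, (A j i : ℝ) * mt j) * lam i := by simp [hAm]
      _ = ∑ j, mt j * ∑ i, (A j i : ℝ) * lam i := by
        simp only [Finset.sum_mul, Finset.mul_sum]
        rw [Finset.sum_comm]
        exact Finset.sum_congr rfl fun j _ => Finset.sum_congr rfl fun i _ => by ring
      _ = _ := by simp [hAl]
  let X := Finset.univ.filter fun i => lam i ≠ 0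
  let Y := Finset.univ.filter fun j => mu j ≠ 0
  let R : J → ℕ := fun j => ∑ i ∈ X, A j i
  let C : I → ℕ := fun i => ∑ j ∈ Y, A j i
  let Q : Finset (J × I) := Finset.univ.filter fun q =>
    mu q.1 ≠ 0 ∧ lam q.2 ≠ 0 ∧ 0 < A q.1 q.2 ∧ R q.1 = 1 ∧ C q.2 = 1
  let W : J × I → ℝ := fun q => mu q.1 * A q.1 q.2 * lam q.2
  have hlam1 : ∀ j, ∑ i ∈ X, (A j i : ℝ) * lam i = 1 := by
    intro j
    rw [← hAl j]
    apply Finset.sum_subset (Finset.subset_univ _)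
    intro i _ hi
    simp only [X, Finset.mem_filter, Finset.mem_univ, true_and, not_not] at hi
    simp [hi]
  have hmu1 : ∀ i, ∑ j ∈ Y, (A j i : ℝ) * mu j = 1 := by
    intro i
    rw [← hAmu i]
    apply Finset.sum_subset (Finset.subset_univ _)
    intro i _ hi
    simp only [Y, Finset.mem_filter, Finset.mem_univ, true_and, not_not] at hi
    simp [hi]
  have hQ : ∀ q ∈ Q, lam q.2 = 1 ∧ mu q.1 = 1 ∧ A q.1 q.2 = 1 := by
    rintro ⟨j, i⟩ hq
    simp only [Q, Finset.mem_filter, Finset.mem_univ, true_and] at hq ⊢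
    obtain ⟨h1, h2, h3, h4, h5⟩ := hq
    have hiX : i ∈ X := by simp [X, h2]
    have hjY : j ∈ Y := by simp [Y, h1]
    have e1 : A j i + ∑ i' ∈ X.erase i, A j i' = 1 := by rw [Finset.add_sum_erase X _ hiX]; exact h4
    have e2 : A j i + ∑ j' ∈ Y.erase j, A j' i = 1 := by
      rw [Finset.add_sum_erase Y (fun j' => A j' i) hjY]; exact h5
    have hA1 : A j i = 1 := by omega
    have e3 : ∑ i' ∈ X.erase i, A j i' = 0 := by omega
    have e4 : ∑ j' ∈ Y.erase j, A j' i = 0 := by omega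
    rw [Finset.sum_eq_zero_iff] at e3 e4
    refine ⟨?_, ?_, hA1⟩
    · have := hlam1 j
      rw [← Finset.add_sum_erase _ _ hiX, Finset.sum_eq_zero, hA1] at this
      · simpa using this
      · intro x hx; rw [e3 x hx]; simp
    · have := hmu1 i
      rw [← Finset.add_sum_erase _ _ hjY, Finset.sum_eq_zero, hA1] at this
      · simpa using this
      · intro x hx; rw [e4 x hx]; simp
  have hWsum : ∑ q, W q = r := by
    rw [Fintype.sum_prod_type, Finset.sum_comm, ← hsum_lam]
    refine Finset.sum_congr rfl fun i _ => ?_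
    simp only [W]
    rw [← Finset.sum_mul]
    have := hAmu i
    simp only [mul_comm] at this
    simp only [mul_comm (mu _)]
    rw [hAmu i, one_mul]
  have hXc : (X.card : ℝ) = ∑ q, W q * R q.1 := by
    calc (X.card : ℝ) = ∑ i ∈ X, ∑ j, (A j i : ℝ) * mu j := by simp [hAmu]
      _ = ∑ j, mu j * R j := by
        rw [Finset.sum_comm]
        refine Finset.sum_congr rfl fun j _ => ?_
        simp only [R]; push_cast; rw [Finset.mul_sum]
        exact Finset.sum_congr rfl fun i _ => by ring
      _ = ∑ j, ∑ i, mu j * A j i * lam i * R j := by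
        refine Finset.sum_congr rfl fun j _ => ?_
        calc mu j * (R j : ℝ) = mu j * R j * ∑ i, (A j i : ℝ) * lam i := by rw [hAl]; ring
          _ = _ := by
            rw [Finset.mul_sum]
            exact Finset.sum_congr rfl fun i _ => by ring
      _ = _ := by rw [Fintype.sum_prod_type]
  have hYc : (Y.card : ℝ) = ∑ q, W q * C q.2 := by
    calc (Y.card : ℝ) = ∑ j ∈ Y, ∑ i, (A j i : ℝ) * lam i := by simp [hAl]
      _ = ∑ i, lam i * C i := by
        rw [Finset.sum_comm]
        refine Finset.sum_congr rfl fun j _ => ?_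
        simp only [C]; push_cast; rw [Finset.mul_sum]
        exact Finset.sum_congr rfl fun i _ => by ring
      _ = ∑ i, ∑ j, mu j * A j i * lam i * C i := by
        refine Finset.sum_congr rfl fun i _ => ?_
        calc lam i * (C i : ℝ) = lam i * C i * ∑ j, (A j i : ℝ) * mu j := by rw [hAmu]; ring
          _ = _ := by
            rw [Finset.mul_sum]
            exact Finset.sum_congr rfl fun i _ => by ring
      _ = _ := by rw [Fintype.sum_prod_type, Finset.sum_comm]
  have hcount : 3 * (r : ℝ) - Q.card ≤ X.card + Y.card := by
    have hQc : (Q.card : ℝ) = ∑ q, if q ∈ Q then (1 : ℝ) else 0 := by simp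
    rw [← hWsum, hXc, hYc, hQc, Finset.mul_sum, ← Finset.sum_sub_distrib, ← Finset.sum_add_distrib]
    refine Finset.sum_le_sum fun q _ => ?_
    have hW0 : 0 ≤ W q := mul_nonneg (mul_nonneg (hmu _) (Nat.cast_nonneg _)) (hlam _)
    by_cases hq : q ∈ Q
    · rw [if_pos hq]
      have h1 := hQ q hq
      simp only [Q, Finset.mem_filter, Finset.mem_univ, true_and] at hq
      rw [hq.2.2.2.1, hq.2.2.2.2]
      simp only [W, h1]; norm_num
    · rw [if_neg hq, sub_zero, ← mul_add, mul_comm]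
      by_cases hWz : W q = 0
      · rw [hWz]; simp
      refine mul_le_mul_of_nonneg_left ?_ hW0
      simp only [W, mul_eq_zero, not_or] at hWz
      obtain ⟨⟨h1, h2⟩, h3⟩ := hWz
      have h2' : A q.1 q.2 ≠ 0 := by exact_mod_cast h2
      have hR : A q.1 q.2 ≤ R q.1 := Finset.single_le_sum (f := fun i => A q.1 i)
        (fun _ _ => Nat.zero_le _) (show q.2 ∈ X by simp [X, h3])
      have hC : A q.1 q.2 ≤ C q.2 := Finset.single_le_sum (f := fun j => A j q.2)
        (fun _ _ => Nat.zero_le _) (show q.1 ∈ Y by simp [Y, h1])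
      have : ¬ (R q.1 = 1 ∧ C q.2 = 1) := by
        intro h
        apply hq
        simp only [Q, Finset.mem_filter, Finset.mem_univ, true_and]
        exact ⟨h1, h3, by omega, h.1, h.2⟩
      have : 3 ≤ R q.1 + C q.2 := by omega
      exact_mod_cast this
  have hcount' : 3 * r ≤ X.card + Y.card + Q.card := by
    have : 3 * (r : ℝ) ≤ X.card + Y.card + Q.card := by linarith
    exact_mod_cast this
  have hA := half_aux A lam lt mu hlam hAl hlt hAt hmu hAmu hlb Q hQ (by
    intro q hq
    by_contra hno
    push Not at hno
    obtain ⟨i', hi', hne⟩ := hcon q.1 q.2 (hQ q hq).2.2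
    apply hi'
    symm
    apply hcol
    intro j hj
    have : q.1 = j := by
      apply hrow
      intro v hv
      exact Nat.pos_of_ne_zero (hno j hj v hv)
    rw [← this]; omega)
  have hB := half_aux (fun i j => A j i) mu mt lam hmu hAmu hmt hAm hlam hAl hmb
    (Q.map (Equiv.prodComm J I).toEmbedding) (by
      intro q hq
      simp only [Finset.mem_map, Equiv.coe_toEmbedding] at hq
      obtain ⟨p, hp, rfl⟩ := hq
      have := hQ p hp
      exact ⟨this.2.1, this.1, this.2.2⟩) (by
      intro q hq
      simp only [Finset.mem_map, Equiv.coe_toEmbedding] at hq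
      obtain ⟨p, hp, rfl⟩ := hq
      obtain ⟨i', hi', hne⟩ := hcon p.1 p.2 (hQ p hp).2.2
      refine ⟨i', Nat.pos_of_ne_zero hne, ?_⟩
      by_contra hno
      push Not at hno
      apply hi'
      apply hcol
      intro j hj
      exact Nat.pos_of_ne_zero (hno j hj))
  have hT : (Matrix.of fun i j => (A j i : ℝ)).rank = (Matrix.of fun j i => (A j i : ℝ)).rank := by
    rw [← Matrix.rank_transpose]; rfl
  rw [hT, Finset.card_map] at hB
  change 2 * X.card + _ ≤ _ at hA
  change 2 * Y.card + _ ≤ _ at hB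
  omega

def IsMaxi {V : Type*} (L : Submodule ℝ (V → ℝ)) (f : V → ℝ) : Prop :=
  f ∈ L ∧ (∀ v, 0 ≤ f v) ∧ f ≠ 0 ∧ ∀ g ∈ L, (∀ v, 0 ≤ g v) → g ≠ 0 →
    (∀ v, f v = 0 → g v = 0) → (∀ v, g v = 0 → f v = 0)

lemma sub_aux {V : Type*} [Fintype V] (g f : V → ℝ) (hf : ∀ v, 0 ≤ f v) (hf0 : f ≠ 0)
    (hZ : ∀ v, f v = 0 → g v = 0) :
    ∃ t : ℝ, ∃ v, f v ≠ 0 ∧ t = g v / f v ∧ g v - t * f v = 0 ∧ ∀ w, 0 ≤ g w - t * f w := by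
  classical
  obtain ⟨v0, hv0⟩ := Function.ne_iff.1 hf0
  obtain ⟨k, hk, hmin⟩ := Finset.exists_min_image (Finset.univ.filter fun i => f i ≠ 0)
      (fun i => g i / f i) ⟨v0, by simpa using hv0⟩
  simp only [Finset.mem_filter, Finset.mem_univ, true_and] at hk hmin
  refine ⟨g k / f k, k, hk, rfl, by field_simp; simp, fun w => ?_⟩
  by_cases hw : f w = 0
  · rw [hw, hZ w hw]; simp
  · have h1 : 0 < f w := lt_of_le_of_ne (hf w) (Ne.symm hw)
    have := hmin w hw
    rw [le_div_iff₀ h1] at this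
    linarith

lemma maxi_mult {V : Type*} [Fintype V] (L : Submodule ℝ (V → ℝ)) (f : V → ℝ)
    (hf : IsMaxi L f) (g : V → ℝ) (hg : g ∈ L) (hZ : ∀ v, f v = 0 → g v = 0) :
    ∃ t : ℝ, ∀ v, g v = t * f v := by
  obtain ⟨hfL, hf0, hfn, hmax⟩ := hf
  obtain ⟨t, k, hk, -, hk0, hnn⟩ := sub_aux g f hf0 hfn hZ
  refine ⟨t, ?_⟩
  by_contra hcon
  push Not at hcon
  obtain ⟨w, hw⟩ := hcon
  apply hk
  refine hmax (g - t • f) (L.sub_mem hg (L.smul_mem t hfL)) (by simpa using hnn) ?_ ?_ k (by simpa using hk0)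
  · intro h
    have := congrFun h w
    simp only [Pi.sub_apply, Pi.smul_apply, smul_eq_mul, Pi.zero_apply] at this
    apply hw; linarith
  · intro v hv; simp [hv, hZ v hv]

lemma cone_gen {V J : Type*} [Fintype V] [Fintype J] (L : Submodule ℝ (V → ℝ))
    (U : J → V → ℝ) (hU : ∀ f, IsMaxi L f → ∃ j, ∃ t : ℝ, 0 ≤ t ∧ ∀ v, f v = t * U j v)
    (f : V → ℝ) (hf : f ∈ L) (hf0 : ∀ v, 0 ≤ f v) :
    ∃ c : J → ℝ, (∀ j, 0 ≤ c j) ∧ ∀ v, f v = ∑ j, c j * U j v := by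
  classical
  obtain ⟨n, hn⟩ : ∃ n, n = (Finset.univ.filter fun i => f i ≠ 0).card := ⟨_, rfl⟩
  induction n using Nat.strong_induction_on generalizing f with
  | _ n ih =>
  by_cases hfz : f = 0
  · exact ⟨0, fun _ => le_rfl, fun v => by simp [hfz]⟩
  by_cases hm : IsMaxi L f
  · obtain ⟨j, t, ht, hft⟩ := hU f hm
    refine ⟨Pi.single j t, fun j' => ?_, fun v => ?_⟩
    · by_cases h : j' = j
      · subst h; simpa using ht
      · simp [h]
    · rw [Finset.sum_eq_single j]
      · simpa using hft v
      · intro b _ hb; simp [hb]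
      · simp
  · have : ∃ g ∈ L, (∀ v, 0 ≤ g v) ∧ g ≠ 0 ∧ (∀ v, f v = 0 → g v = 0) ∧ ∃ v, g v = 0 ∧ f v ≠ 0 := by
      by_contra hcon
      push Not at hcon
      exact hm ⟨hf, hf0, hfz, fun g h1 h2 h3 h4 v hv => hcon g h1 h2 h3 h4 v hv⟩
    obtain ⟨g, hgL, hg0, hgn, hZ, w, hgw, hfw⟩ := this
    -- subtract from f the largest multiple of g
    obtain ⟨v0, hv0⟩ := Function.ne_iff.1 hgn
    obtain ⟨k, hk, hmin⟩ := Finset.exists_min_image (Finset.univ.filter fun i => g i ≠ 0)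
      (fun i => f i / g i) ⟨v0, by simpa using hv0⟩
    simp only [Finset.mem_filter, Finset.mem_univ, true_and] at hk hmin
    have ht : 0 ≤ f k / g k := div_nonneg (hf0 k) (hg0 k)
    have hfk : f k ≠ 0 := fun h => hk (hZ k h)
    obtain ⟨c1, hc1, he1⟩ := ih (Finset.univ.filter fun i => g i ≠ 0).card (by
      rw [hn]
      apply Finset.card_lt_card
      refine ⟨fun i hi => ?_, fun hsub => ?_⟩
      · simp only [Finset.mem_filter, Finset.mem_univ, true_and] at hi ⊢
        exact fun h => hi (hZ i h)
      · have := hsub (show w ∈ _ by simpa using hfw)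
        simp [hgw] at this) g hgL hg0 rfl
    obtain ⟨c2, hc2, he2⟩ := ih (Finset.univ.filter fun i => (f - (f k / g k) • g) i ≠ 0).card (by
      rw [hn]
      apply Finset.card_lt_card
      refine ⟨fun i hi => ?_, fun hsub => ?_⟩
      · simp only [Finset.mem_filter, Finset.mem_univ, true_and] at hi ⊢
        intro h; apply hi; simp [h, hZ i h]
      · have := hsub (show k ∈ _ by simpa using hfk)
        simp only [Finset.mem_filter, Finset.mem_univ, true_and] at this
        apply this
        simp only [Pi.sub_apply, Pi.smul_apply, smul_eq_mul]; field_simp; simp)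
      (f - (f k / g k) • g) (L.sub_mem hf (L.smul_mem _ hgL)) (by
        intro i
        simp only [Pi.sub_apply, Pi.smul_apply, smul_eq_mul]
        by_cases h : g i = 0
        · rw [h]; simpa using hf0 i
        · have h1 : 0 < g i := lt_of_le_of_ne (hg0 i) (Ne.symm h)
          have := hmin i h
          rw [le_div_iff₀ h1] at this; linarith) rfl
    refine ⟨fun j => f k / g k * c1 j + c2 j, fun j => add_nonneg (mul_nonneg ht (hc1 j)) (hc2 j), fun v => ?_⟩
    have e2 := he2 v
    simp only [Pi.sub_apply, Pi.smul_apply, smul_eq_mul] at e2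
    simp only [add_mul, Finset.sum_add_distrib, ← e2, mul_assoc, ← Finset.mul_sum, ← he1]
    ring

/-- combinatorial heart: a subspace `L` of functions on `V`. -/
lemma cone_main {V : Type*} [Fintype V] [DecidableEq V] (L : Submodule ℝ (V → ℝ))
    (h1L : (fun _ => (1:ℝ)) ∈ L)
    (hsep : ∀ v : V, ∃ g ∈ L, g v = 0 ∧ ∀ w, w ≠ v → 0 < g w)
    (lt : V → ℝ) (hlt : ∀ v, 0 < lt v) (r : ℕ) (hr : ∑ v, lt v = r)
    (hdim : 2 * Module.finrank ℝ L < 3 * r)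
    (hint : ∀ f, IsMaxi L f → ∃ t : ℝ, 0 < t ∧ (∀ v, ∃ n : ℕ, t * f v = n) ∧
      ∑ v, (t * f v) * lt v = 1) :
    ∃ f, IsMaxi L f ∧ ∃ v, f v ≠ 0 ∧ (∀ t : ℝ, ∑ v, (t * f v) * lt v = 1 → t * f v = 1) ∧ ∀ w, w ≠ v → f w = 0 := by
  classical
  let J := {Z : Finset V // ∃ f, IsMaxi L f ∧ ∀ v, v ∈ Z ↔ f v = 0}
  have hJ : ∀ Z : J, ∃ a : V → ℕ, IsMaxi L (fun v => (a v : ℝ)) ∧ (∀ v, v ∈ Z.1 ↔ a v = 0) ∧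
      ∑ v, (a v : ℝ) * lt v = 1 := by
    rintro ⟨Z, f, hf, hZ⟩
    obtain ⟨t, ht, hn, hs⟩ := hint f hf
    choose a ha using hn
    refine ⟨a, ?_, ?_, ?_⟩
    · obtain ⟨h1, h2, h3, h4⟩ := hf
      have e : (fun v => (a v : ℝ)) = t • f := by funext v; simp [← ha]
      rw [e]
      refine ⟨L.smul_mem _ h1, fun v => mul_nonneg ht.le (h2 v), smul_ne_zero ht.ne' h3, ?_⟩
      intro g g1 g2 g3 g4 v hv
      simp [h4 g g1 g2 g3 (fun v hv => g4 v (by simp [hv])) v hv]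
    · intro v
      rw [hZ]
      have := ha v
      constructor
      · intro h; rw [h] at this; simpa using this.symm
      · intro h; rw [h] at this; simpa [ht.ne'] using this
    · simpa [← ha] using hs
  choose A hA1 hA2 hA3 using hJ
  have hgen := cone_gen L (fun (j : J) v => (A j v : ℝ)) (by
    intro f hf
    let j : J := ⟨Finset.univ.filter fun v => f v = 0, f, hf, by simp⟩
    obtain ⟨t, ht⟩ := maxi_mult L _ (hA1 j) f hf.1 (by
      intro v hv
      have : v ∈ j.1 := (hA2 j v).2 (by exact_mod_cast hv)
      simpa [j] using this)
    refine ⟨j, t, ?_, ht⟩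
    obtain ⟨v, hv⟩ := Function.ne_iff.1 hf.2.2.1
    have h1 : 0 < f v := lt_of_le_of_ne (hf.2.1 v) (Ne.symm hv)
    rw [ht v] at h1
    by_contra hneg
    push Not at hneg
    have := mul_nonneg (neg_nonneg.2 hneg.le) (Nat.cast_nonneg (α := ℝ) (A j v))
    linarith)
  -- positive mu
  have hmu : ∃ mt : J → ℝ, (∀ j, 0 < mt j) ∧ ∀ v, ∑ j, (A j v : ℝ) * mt j = 1 := by
    obtain ⟨B, hB⟩ : ∃ B : ℝ, 0 < B ∧ ∀ v, ∑ j, (A j v : ℝ) ≤ B := by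
      refine ⟨∑ v, ∑ j, (A j v : ℝ) + 1, ?_, fun v => ?_⟩
      · positivity
      · have := Finset.single_le_sum (f := fun v => ∑ j, (A j v : ℝ))
          (fun v _ => by positivity) (Finset.mem_univ v)
        linarith
    obtain ⟨c, hc, hce⟩ := hgen (fun v => 1 - B⁻¹ * ∑ j, (A j v : ℝ)) (by
      have e : (fun v => 1 - B⁻¹ * ∑ j, (A j v : ℝ)) =
          (fun _ => (1:ℝ)) - B⁻¹ • ∑ j, (fun v => (A j v : ℝ)) := by
        funext v; simp
      rw [e]
      exact L.sub_mem h1L (L.smul_mem _ (L.sum_mem fun j _ => (hA1 j).1))) (by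
      intro v
      have := hB.2 v
      have : B⁻¹ * ∑ j, (A j v : ℝ) ≤ 1 := by
        rw [inv_mul_le_iff₀ hB.1]; linarith
      linarith)
    refine ⟨fun j => c j + B⁻¹, fun j => add_pos_of_nonneg_of_pos (hc j) (inv_pos.2 hB.1), fun v => ?_⟩
    have := hce v
    simp only [mul_add, Finset.sum_add_distrib, ← Finset.sum_mul]
    simp only [mul_comm (c _)] at this
    linarith
  obtain ⟨mt, hmt, hAm⟩ := hmu
  obtain ⟨j, i, hji, hrest⟩ := matrix_main A lt mt hlt hA3 hmt hAm (by
    intro j j' h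
    have h0 : ∀ v, (A j v : ℝ) = 0 → (A j' v : ℝ) = 0 := by
      intro v hv
      have hv' : A j v = 0 := by exact_mod_cast hv
      have : A j' v = 0 := by
        by_contra hne
        have := h v (Nat.pos_of_ne_zero hne)
        omega
      exact_mod_cast this
    have h2 := (hA1 j).2.2.2 _ (hA1 j').1 (hA1 j').2.1 (hA1 j').2.2.1 h0
    apply Subtype.ext
    ext v
    rw [hA2, hA2]
    constructor
    · intro hv; exact_mod_cast h0 v (by exact_mod_cast hv)
    · intro hv
      have h3 : (A j v : ℝ) = 0 := h2 v (by exact_mod_cast hv)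
      exact_mod_cast h3) (by
    intro i i' h
    by_contra hne
    obtain ⟨g, hgL, hg0, hgp⟩ := hsep i'
    obtain ⟨c, hc, hce⟩ := hgen g hgL (fun w => by
      by_cases hw : w = i'
      · rw [hw, hg0]
      · exact (hgp w hw).le)
    have h1 := hgp i hne
    rw [hce i] at h1
    obtain ⟨j, -, hj⟩ := Finset.exists_lt_of_sum_lt (s := Finset.univ) (f := fun _ : J => (0:ℝ))
      (g := fun j => c j * (A j i : ℝ)) (by simpa using h1)
    have hAji : 0 < A j i := by
      rcases Nat.eq_zero_or_pos (A j i) with h | h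
      · rw [h] at hj; simp at hj
      · exact h
    have hcj : 0 < c j := by
      rcases (hc j).eq_or_lt with h | h
      · rw [← h] at hj; simp at hj
      · exact h
    have h3 : (0:ℝ) < A j i' := by exact_mod_cast h j hAji
    have h4 := Finset.single_le_sum (f := fun j => c j * (A j i' : ℝ))
      (fun j _ => mul_nonneg (hc j) (Nat.cast_nonneg _)) (Finset.mem_univ j)
    rw [← hce i', hg0] at h4
    have := mul_pos hcj h3
    linarith) r hr (by
    refine lt_of_le_of_lt ?_ hdim
    refine Nat.mul_le_mul_left 2 ?_
    rw [Matrix.rank_eq_finrank_span_row]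
    apply Submodule.finrank_mono
    rw [Submodule.span_le]
    rintro _ ⟨j, rfl⟩
    exact (hA1 j).1)
  refine ⟨fun v => (A j v : ℝ), hA1 j, i, ?_, ?_, ?_⟩
  · simp [hji]
  · intro t ht
    have e := hA3 j
    simp only [mul_assoc, ← Finset.mul_sum] at ht
    rw [e] at ht
    simpa [hji] using ht
  · intro w hw
    simp [hrest w hw]

def snocLin (N : ℕ) : ((Fin N → ℝ) × ℝ) →ₗ[ℝ] (Fin (N+1) → ℝ) where
  toFun p := Fin.snoc p.1 p.2
  map_add' p q := by
    ext i; refine Fin.lastCases ?_ (fun j => ?_) i <;> simp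
  map_smul' c p := by
    ext i; refine Fin.lastCases ?_ (fun j => ?_) i <;> simp

lemma snocLin_apply (N : ℕ) (x : Fin N → ℝ) (t : ℝ) : snocLin N (x, t) = Fin.snoc x t := rfl

lemma isLat_add {N : ℕ} {x y : Fin N → ℝ} (hx : IsLatticePt x) (hy : IsLatticePt y) :
    IsLatticePt (x + y) := fun i => by
  obtain ⟨a, ha⟩ := hx i
  obtain ⟨b, hb⟩ := hy i
  exact ⟨a + b, by simp [ha, hb]⟩

lemma isLat_sub {N : ℕ} {x y : Fin N → ℝ} (hx : IsLatticePt x) (hy : IsLatticePt y) :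
    IsLatticePt (x - y) := fun i => by
  obtain ⟨a, ha⟩ := hx i
  obtain ⟨b, hb⟩ := hy i
  exact ⟨a - b, by simp [ha, hb]⟩

lemma isLat_smul {N : ℕ} {x : Fin N → ℝ} (z : ℤ) (hx : IsLatticePt x) :
    IsLatticePt ((z : ℝ) • x) := fun i => by
  obtain ⟨a, ha⟩ := hx i
  exact ⟨z * a, by simp [ha]⟩

lemma pyr_aux {N : ℕ} (V : Finset (Fin N → ℝ)) (hV : ∀ v ∈ V, IsLatticePt v)
    (vi v0 : Fin N → ℝ) (hvi : vi ∈ V) (hv0 : v0 ∈ V) (hne : v0 ≠ vi)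
    (U : (Fin N → ℝ) →ᵃ[ℝ] ℝ)
    (hU : IsIntegralOn (convexHull ℝ (V : Set (Fin N → ℝ))) U) (hU1 : U vi = 1)
    (hU0 : ∀ w ∈ V, w ≠ vi → U w = 0) :
    ∃ (m : ℕ) (P' : Set (Fin m → ℝ)), IsLatticePolytope P' ∧
      LatticeIso (convexHull ℝ (V : Set (Fin N → ℝ))) (pyramidOver P') := by
  classical
  set W : Finset (Fin N → ℝ) := (V.erase vi).image (fun v => v - v0) with hW
  set A : (Fin N → ℝ) →ᵃ[ℝ] (Fin N → ℝ) := AffineMap.id ℝ _ - AffineMap.const ℝ _ v0 -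
    (LinearMap.toSpanSingleton ℝ _ (vi - v0)).toAffineMap.comp U with hA
  have hAx : ∀ x, A x = x - v0 - U x • (vi - v0) := fun x => by simp [hA]
  set f : (Fin N → ℝ) →ᵃ[ℝ] (Fin (N+1) → ℝ) := (snocLin N).toAffineMap.comp (A.prod U) with hf
  have hfx : ∀ x, f x = Fin.snoc (x - v0 - U x • (vi - v0)) (U x) := fun x => by
    rw [← hAx]; rfl
  set g : (Fin (N+1) → ℝ) →ᵃ[ℝ] (Fin N → ℝ) :=
    (LinearMap.funLeft ℝ ℝ (Fin.castSucc : Fin N → Fin (N+1))).toAffineMap +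
      AffineMap.const ℝ _ v0 +
      (LinearMap.toSpanSingleton ℝ _ (vi - v0)).toAffineMap.comp
        (LinearMap.proj (Fin.last N) : (Fin (N+1) → ℝ) →ₗ[ℝ] ℝ).toAffineMap with hg
  have hgx : ∀ y, g y = (fun i => y (Fin.castSucc i)) + v0 + y (Fin.last N) • (vi - v0) :=
    fun y => by simp [hg, LinearMap.funLeft]; rfl
  have hgf : ∀ x, g (f x) = x := fun x => by
    rw [hgx, hfx]; ext i; simp; ring
  have hconv : pyramidOver (convexHull ℝ (W : Set (Fin N → ℝ))) =
      convexHull ℝ (f '' (V : Set (Fin N → ℝ))) := by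
    have e1 : (fun x => (Fin.snoc x (0 : ℝ) : Fin (N+1) → ℝ)) '' (convexHull ℝ (W : Set (Fin N → ℝ)))
        = convexHull ℝ ((fun x => (Fin.snoc x (0 : ℝ) : Fin (N+1) → ℝ)) '' (W : Set (Fin N → ℝ))) := by
      exact ((snocLin N).comp (LinearMap.inl ℝ (Fin N → ℝ) ℝ)).image_convexHull _
    have e2 : f '' (V : Set (Fin N → ℝ)) = (fun x => (Fin.snoc x (0 : ℝ) : Fin (N+1) → ℝ)) '' (W : Set (Fin N → ℝ))
        ∪ {Fin.snoc (0 : Fin N → ℝ) (1 : ℝ)} := by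
      rw [← Finset.insert_erase hvi, Finset.coe_insert, Set.image_insert_eq, Set.union_singleton]
      congr 1
      · rw [hfx, hU1]; simp
      · rw [hW, Finset.coe_image, Set.image_image]
        refine Set.image_congr fun w hw => ?_
        have hw' := Finset.mem_erase.1 (Finset.mem_coe.1 hw)
        rw [hfx, hU0 w hw'.2 hw'.1]; simp
    rw [pyramidOver, e1, e2, convexHull_convexHull_union_left]
  have hfP : f '' (convexHull ℝ (V : Set (Fin N → ℝ))) = convexHull ℝ (f '' (V : Set (Fin N → ℝ))) :=
    f.image_convexHull _
  refine ⟨N, convexHull ℝ (W : Set (Fin N → ℝ)), ⟨W, ?_, ?_, rfl⟩, f, g, ?_, ?_, ?_, ?_, ?_, ?_⟩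
  · exact ⟨_, Finset.mem_image_of_mem _ (Finset.mem_erase.2 ⟨hne, hv0⟩)⟩
  · intro w hw
    obtain ⟨v, hv, rfl⟩ := Finset.mem_image.1 hw
    exact isLat_sub (hV _ (Finset.mem_of_mem_erase hv)) (hV _ hv0)
  · rw [hconv, hfP]
  · rw [hconv, ← hfP, Set.image_image]; simp [hgf]
  · intro x _; exact hgf x
  · intro y hy
    rw [hconv, affineSpan_convexHull, ← AffineSubspace.map_span] at hy
    obtain ⟨x, _, rfl⟩ := hy
    simp [hgf]
  · intro x hx hl
    obtain ⟨z, hz⟩ := hU x hx hl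
    rw [hfx]
    intro i
    refine Fin.lastCases ?_ (fun j => ?_) i
    · simpa using ⟨z, hz⟩
    · rw [Fin.snoc_castSucc, hz]
      exact isLat_sub (isLat_sub hl (hV _ hv0)) (isLat_smul z (isLat_sub (hV _ hvi) (hV _ hv0))) j
  · intro y _ hl
    rw [hgx]
    obtain ⟨z, hz⟩ := hl (Fin.last N)
    rw [hz]
    exact isLat_add (isLat_add (fun i => hl _) (hV _ hv0))
      (isLat_smul z (isLat_sub (hV _ hvi) (hV _ hv0)))

noncomputable def resL {N : ℕ} (S : Finset (Fin N → ℝ)) : Submodule ℝ (S → ℝ) where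
  carrier := {h | ∃ a : (Fin N → ℝ) →ᵃ[ℝ] ℝ, ∀ v : S, h v = a v}
  add_mem' := by
    rintro h k ⟨a, ha⟩ ⟨b, hb⟩
    exact ⟨a + b, fun v => by simp [ha, hb]⟩
  zero_mem' := ⟨0, fun v => by simp⟩
  smul_mem' := by
    rintro c h ⟨a, ha⟩
    exact ⟨c • a, fun v => by simp [ha]⟩

lemma mem_resL {N : ℕ} (S : Finset (Fin N → ℝ)) (h : S → ℝ) :
    h ∈ resL S ↔ ∃ a : (Fin N → ℝ) →ᵃ[ℝ] ℝ, ∀ v : S, h v = a v := Iff.rfl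

lemma finrank_resL {N : ℕ} (S : Finset (Fin N → ℝ)) (hS : S.Nonempty) :
    Module.finrank ℝ (resL S) =
      polyDim (convexHull ℝ (S : Set (Fin N → ℝ))) + 1 := by
  obtain ⟨s0, hs0⟩ := hS
  rw [polyDim, affineSpan_convexHull, direction_affineSpan]
  set D := vectorSpan ℝ (S : Set (Fin N → ℝ)) with hD
  have hm : ∀ v : S, (v : Fin N → ℝ) - s0 ∈ D := fun v =>
    vsub_mem_vectorSpan ℝ (s := (S : Set (Fin N → ℝ))) v.2 hs0
  let Θ : (Module.Dual ℝ D × ℝ) →ₗ[ℝ] (S → ℝ) :=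
    { toFun := fun p v => p.1 ⟨(v : Fin N → ℝ) - s0, hm v⟩ + p.2
      map_add' := fun p q => by ext v; simp; ring
      map_smul' := fun c p => by ext v; simp; ring }
  have hΘ : ∀ p v, Θ p v = p.1 ⟨(v : Fin N → ℝ) - s0, hm v⟩ + p.2 := fun _ _ => rfl
  have hinj : Function.Injective Θ := by
    rw [← LinearMap.ker_eq_bot, LinearMap.ker_eq_bot']
    rintro ⟨φ, c⟩ h
    have hc : c = 0 := by
      have := congrFun h ⟨s0, hs0⟩
      rw [hΘ] at this
      have e : (⟨s0 - s0, hm ⟨s0, hs0⟩⟩ : D) = 0 := by ext; simp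
      rw [e] at this
      simpa using this
    subst hc
    have hφ : φ = 0 := by
      have key : ∀ x (hx : x ∈ D), φ ⟨x, hx⟩ = 0 := by
        intro x hx
        have hx' := hx
        rw [hD, vectorSpan_eq_span_vsub_set_right ℝ (s := (S : Set (Fin N → ℝ))) hs0] at hx'
        have hle : Submodule.span ℝ ((fun p => p -ᵥ s0) '' (S : Set (Fin N → ℝ))) ≤
            (LinearMap.ker φ).map D.subtype := by
          rw [Submodule.span_le]
          rintro _ ⟨v, hv, rfl⟩
          refine ⟨⟨v - s0, hm ⟨v, hv⟩⟩, ?_, rfl⟩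
          have := congrFun h ⟨v, hv⟩
          rw [hΘ] at this
          simpa using this
        obtain ⟨y, hy, hyx⟩ := hle hx'
        have : y = ⟨x, hx⟩ := Subtype.ext hyx
        rw [← this]; exact hy
      ext x
      exact key x.1 x.2
    rw [hφ]; rfl
  have hrange : LinearMap.range Θ = resL S := by
    ext h
    rw [mem_resL]
    constructor
    · rintro ⟨⟨φ, c⟩, rfl⟩
      obtain ⟨ψ, hψ⟩ := LinearMap.exists_extend φ
      refine ⟨ψ.toAffineMap + AffineMap.const ℝ _ (c - ψ s0), fun v => ?_⟩
      rw [hΘ]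
      have : φ ⟨(v : Fin N → ℝ) - s0, hm v⟩ = ψ (v - s0) := by rw [← hψ]; rfl
      simp [this]; ring
    · rintro ⟨a, ha⟩
      refine ⟨(a.linear.comp D.subtype, a s0), ?_⟩
      ext v
      rw [hΘ, ha]
      have := a.linearMap_vsub (v : Fin N → ℝ) s0
      simp only [vsub_eq_sub] at this
      simp [this]
  rw [← hrange, LinearMap.finrank_range_of_inj hinj]
  simp [Subspace.dual_finrank_eq]

lemma dim_zero_set {N : ℕ} (V Z : Finset (Fin N → ℝ)) (hZV : Z ⊆ V) (hZ : Z.Nonempty)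
    (f : V → ℝ) (hf : IsMaxi (resL V) f) (hfZ : ∀ v : V, f v = 0 ↔ (v : Fin N → ℝ) ∈ Z) :
    polyDim (convexHull ℝ (Z : Set (Fin N → ℝ))) + 1 =
      polyDim (convexHull ℝ (V : Set (Fin N → ℝ))) := by
  have h1 := finrank_resL Z hZ
  have h2 := finrank_resL V (hZ.mono hZV)
  let ρ : (V → ℝ) →ₗ[ℝ] (Z → ℝ) := LinearMap.funLeft ℝ ℝ (fun z : Z => (⟨z, hZV z.2⟩ : V))
  let T : resL V →ₗ[ℝ] (Z → ℝ) := ρ.comp (resL V).subtype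
  have hr : LinearMap.range T = resL Z := by
    ext h
    rw [mem_resL]
    constructor
    · rintro ⟨⟨k, hk⟩, rfl⟩
      obtain ⟨a, ha⟩ := hk
      exact ⟨a, fun v => ha ⟨v, hZV v.2⟩⟩
    · rintro ⟨a, ha⟩
      refine ⟨⟨fun v => a v, ⟨a, fun v => rfl⟩⟩, ?_⟩
      ext v
      rw [ha]; rfl
  have hk : LinearMap.ker T = Submodule.span ℝ {(⟨f, hf.1⟩ : resL V)} := by
    ext ⟨g, hg⟩
    rw [LinearMap.mem_ker, Submodule.mem_span_singleton]
    constructor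
    · intro h
      obtain ⟨t, ht⟩ := maxi_mult _ f hf g hg (fun v hv => congrFun h ⟨v, (hfZ v).1 hv⟩)
      refine ⟨t, ?_⟩
      apply Subtype.ext
      ext v
      simp [ht]
    · rintro ⟨t, ht⟩
      have ht' : g = t • f := (congrArg Subtype.val ht).symm
      ext z
      change g ⟨z, hZV z.2⟩ = 0
      rw [ht']
      simp [(hfZ ⟨z, hZV z.2⟩).2 z.2]
  have h3 := LinearMap.finrank_range_add_finrank_ker T
  have h4 : Module.finrank ℝ (LinearMap.ker T) = 1 := by
    rw [hk]
    apply finrank_span_singleton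
    intro h
    exact hf.2.2.1 (congrArg Subtype.val h)
  rw [hr, h1, h2, h4] at h3
  omega

lemma exists_minV {N : ℕ} (P : Set (Fin N → ℝ)) (hP : IsLatticePolytope P) :
    ∃ V : Finset (Fin N → ℝ), V.Nonempty ∧ (∀ v ∈ V, IsLatticePt v) ∧
      P = convexHull ℝ (V : Set (Fin N → ℝ)) ∧
      ∀ v ∈ V, v ∉ convexHull ℝ ((V.erase v : Finset (Fin N → ℝ)) : Set (Fin N → ℝ)) := by
  classical
  have hex : ∃ n, ∃ V : Finset (Fin N → ℝ), V.card = n ∧ V.Nonempty ∧ (∀ v ∈ V, IsLatticePt v) ∧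
      P = convexHull ℝ (V : Set (Fin N → ℝ)) := by
    obtain ⟨V, h⟩ := hP
    exact ⟨_, V, rfl, h⟩
  obtain ⟨V, hc, hne, hl, hPV⟩ := Nat.find_spec hex
  refine ⟨V, hne, hl, hPV, fun v hv hmem => ?_⟩
  have hlt : (V.erase v).card < Nat.find hex := by
    rw [← hc]; exact Finset.card_erase_lt_of_mem hv
  refine Nat.find_min hex hlt ⟨V.erase v, rfl, ?_, fun w hw => hl w (Finset.mem_of_mem_erase hw), ?_⟩
  · have : (convexHull ℝ ((V.erase v : Finset (Fin N → ℝ)) : Set (Fin N → ℝ))).Nonempty := ⟨v, hmem⟩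
    rw [convexHull_nonempty_iff] at this
    exact Finset.coe_nonempty.1 this
  · rw [hPV]
    apply subset_antisymm
    · apply convexHull_min _ (convex_convexHull _ _)
      intro w hw
      by_cases h : w = v
      · rw [h]; exact hmem
      · exact subset_convexHull _ _ (Finset.mem_coe.2 (Finset.mem_erase.2 ⟨h, hw⟩))
    · exact convexHull_mono (Finset.coe_subset.2 (Finset.erase_subset _ _))

lemma sep_aux {N : ℕ} (V : Finset (Fin N → ℝ))
    (hmin : ∀ v ∈ V, v ∉ convexHull ℝ ((V.erase v : Finset (Fin N → ℝ)) : Set (Fin N → ℝ)))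
    (v : V) : ∃ g ∈ resL V, g v = 0 ∧ ∀ w, w ≠ v → 0 < g w := by
  obtain ⟨l, u, h1, h2⟩ := geometric_hahn_banach_point_closed
    (convex_convexHull ℝ ((V.erase v : Finset (Fin N → ℝ)) : Set (Fin N → ℝ)))
    ((Finset.finite_toSet _).isClosed_convexHull ℝ) (hmin v v.2)
  refine ⟨fun w => l w - l v, ⟨(l : (Fin N → ℝ) →ₗ[ℝ] ℝ).toAffineMap - AffineMap.const ℝ _ (l v), fun w => by simp⟩,
    by simp, fun w hw => ?_⟩
  have := h2 w (subset_convexHull _ _ (Finset.mem_coe.2 (Finset.mem_erase.2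
    ⟨fun h => hw (Subtype.ext h), w.2⟩)))
  simp only []
  linarith

lemma interior_extend {N : ℕ} (Q : Set (Fin N → ℝ)) (x c : Fin N → ℝ)
    (hx : x ∈ intrinsicInterior ℝ Q) (hc : c ∈ Q) :
    ∃ ε : ℝ, 0 < ε ∧ x + ε • (x - c) ∈ Q := by
  rw [mem_intrinsicInterior] at hx
  obtain ⟨y, hy, rfl⟩ := hx
  have hcA : c ∈ affineSpan ℝ Q := subset_affineSpan ℝ Q hc
  have hmem : ∀ ε : ℝ, (y : Fin N → ℝ) + ε • ((y : Fin N → ℝ) - c) ∈ affineSpan ℝ Q := by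
    intro ε
    have := AffineSubspace.vadd_mem_of_mem_direction
      (Submodule.smul_mem _ ε (AffineSubspace.vsub_mem_direction y.2 hcA)) y.2
    simpa [add_comm] using this
  let φ : ℝ → affineSpan ℝ Q := fun ε => ⟨_, hmem ε⟩
  have hφ : Continuous φ := by
    apply Continuous.subtype_mk
    fun_prop
  have h0 : φ 0 = y := by ext; simp [φ]
  have hn : φ ⁻¹' (interior ((↑) ⁻¹' Q)) ∈ nhds (0 : ℝ) := by
    apply hφ.continuousAt.preimage_mem_nhds
    rw [h0]
    exact isOpen_interior.mem_nhds hy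
  obtain ⟨δ, hδ, hb⟩ := Metric.mem_nhds_iff.1 hn
  refine ⟨δ / 2, by linarith, ?_⟩
  have : δ / 2 ∈ Metric.ball (0 : ℝ) δ := by
    rw [Metric.mem_ball, Real.dist_eq, sub_zero, abs_of_pos (by linarith)]; linarith
  exact interior_subset (s := ((↑) ⁻¹' Q : Set (affineSpan ℝ Q))) (hb this)

lemma weights_aux {N : ℕ} (V : Finset (Fin N → ℝ)) (hV : V.Nonempty) (r : ℕ) (hr : 0 < r)
    (x : Fin N → ℝ) (hx : x ∈ intrinsicInterior ℝ ((r : ℝ) • convexHull ℝ (V : Set (Fin N → ℝ)))) :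
    ∃ lt : V → ℝ, (∀ v, 0 < lt v) ∧ ∑ v, lt v = r ∧ ∑ v, lt v • (v : Fin N → ℝ) = x := by
  have hk : (0 : ℝ) < V.card := by exact_mod_cast hV.card_pos
  have hr' : (0 : ℝ) < r := by exact_mod_cast hr
  set c : Fin N → ℝ := ∑ v ∈ V, ((V.card : ℝ)⁻¹) • v with hc
  have hcm : c ∈ convexHull ℝ (V : Set (Fin N → ℝ)) := by
    rw [Finset.mem_convexHull']
    exact ⟨fun _ => (V.card : ℝ)⁻¹, fun _ _ => by positivity, by
      rw [Finset.sum_const, nsmul_eq_mul]; field_simp, rfl⟩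
  obtain ⟨ε, hε, hm⟩ := interior_extend _ x ((r : ℝ) • c) hx (Set.smul_mem_smul_set hcm)
  obtain ⟨y, hy, hyx⟩ := hm
  rw [Finset.mem_convexHull'] at hy
  obtain ⟨w, hw0, hw1, hwy⟩ := hy
  have h1ε : (1 + ε) ≠ 0 := by positivity
  have hyx' : (r : ℝ) • y = x + ε • (x - (r : ℝ) • c) := hyx
  have hxe : x = (r / (1 + ε)) • y + (r * ε / (1 + ε)) • c := by
    have : (1 + ε) • x = (r : ℝ) • y + (r * ε) • c := by
      rw [hyx']; module
    rw [div_eq_inv_mul, div_eq_inv_mul, mul_smul, mul_smul, ← smul_add, ← this, smul_smul,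
      inv_mul_cancel₀ h1ε, one_smul]
  refine ⟨fun v => r / (1 + ε) * w v + r * ε / (1 + ε) * (V.card : ℝ)⁻¹, fun v => ?_, ?_, ?_⟩
  · have := hw0 v v.2
    positivity
  · rw [Finset.sum_coe_sort V (fun v => r / (1 + ε) * w v + r * ε / (1 + ε) * (V.card : ℝ)⁻¹),
      Finset.sum_add_distrib, ← Finset.mul_sum, hw1, Finset.sum_const, nsmul_eq_mul]
    field_simp
  · rw [Finset.sum_coe_sort V (fun v => (r / (1 + ε) * w v + r * ε / (1 + ε) * (V.card : ℝ)⁻¹) • v)]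
    conv_rhs => rw [hxe, ← hwy, hc, Finset.smul_sum, Finset.smul_sum, ← Finset.sum_add_distrib]
    refine Finset.sum_congr rfl fun v _ => ?_
    rw [add_smul, mul_smul, mul_smul]

lemma aff_lin {N : ℕ} (a : (Fin N → ℝ) →ᵃ[ℝ] ℝ) (y : Fin N → ℝ) : a y = a.linear y + a 0 := by
  have := a.map_vadd 0 y
  simpa using this

lemma aff_lin_sub {N : ℕ} (a : (Fin N → ℝ) →ᵃ[ℝ] ℝ) (x y : Fin N → ℝ) :
    a.linear (x - y) = a x - a y := by
  rw [aff_lin a x, aff_lin a y, map_sub]; ring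

lemma zero_face {N : ℕ} (V Z : Finset (Fin N → ℝ)) (hZV : Z ⊆ V) (a : (Fin N → ℝ) →ᵃ[ℝ] ℝ)
    (ha : ∀ v ∈ V, 0 ≤ a v) (haZ : ∀ v ∈ V, a v = 0 ↔ v ∈ Z) (y : Fin N → ℝ) 
    (hy : y ∈ convexHull ℝ (V : Set (Fin N → ℝ))) :
    0 ≤ a y ∧ (a y = 0 ↔ y ∈ convexHull ℝ (Z : Set (Fin N → ℝ))) := by
  classical
  rw [Finset.mem_convexHull'] at hy
  obtain ⟨w, hw0, hw1, hwy⟩ := hy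
  have key : a y = ∑ v ∈ V, w v * a v := by
    rw [aff_lin a y, ← hwy, map_sum]
    have : a 0 = ∑ v ∈ V, w v * a 0 := by rw [← Finset.sum_mul, hw1, one_mul]
    rw [this, ← Finset.sum_add_distrib]
    refine Finset.sum_congr rfl fun v _ => ?_
    rw [aff_lin a v, map_smul, smul_eq_mul]; ring
  have hnn : ∀ v ∈ V, 0 ≤ w v * a v := fun v hv => mul_nonneg (hw0 v hv) (ha v hv)
  refine ⟨key ▸ Finset.sum_nonneg hnn, fun h => ?_, fun h => ?_⟩
  · rw [key, Finset.sum_eq_zero_iff_of_nonneg hnn] at h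
    have hz : ∀ v ∈ V, v ∉ Z → w v = 0 := by
      intro v hv hvZ
      rcases mul_eq_zero.1 (h v hv) with h | h
      · exact h
      · exact absurd ((haZ v hv).1 h) hvZ
    rw [Finset.mem_convexHull']
    refine ⟨w, fun v hv => hw0 v (hZV hv), ?_, ?_⟩
    · rw [← hw1]; exact Finset.sum_subset hZV (fun v hv hvZ => hz v hv hvZ)
    · rw [← hwy]; exact Finset.sum_subset hZV (fun v hv hvZ => by rw [hz v hv hvZ, zero_smul])
  · have hc : Convex ℝ (a ⁻¹' {0}) := (convex_singleton (0 : ℝ)).affine_preimage a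
    exact convexHull_min (fun v hv => (haZ v (hZV hv)).2 hv) hc h

lemma polyDim_smul {N : ℕ} (S : Set (Fin N → ℝ)) (r : ℝ) (hr : r ≠ 0) :
    polyDim (r • S) = polyDim S := by
  rw [polyDim, polyDim, ← AffineSubspace.smul_span, AffineSubspace.direction_smul hr]

lemma facet_aux {N : ℕ} (V Z : Finset (Fin N → ℝ)) (hZV : Z ⊆ V) (hZ : Z.Nonempty)
    (f : V → ℝ) (hf : IsMaxi (resL V) f) (hfZ : ∀ v : V, f v = 0 ↔ (v : Fin N → ℝ) ∈ Z)
    (r : ℝ) (hr : 0 < r) :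
    IsFacet (r • convexHull ℝ (V : Set (Fin N → ℝ))) (r • convexHull ℝ (Z : Set (Fin N → ℝ))) := by
  obtain ⟨a, ha⟩ := hf.1
  have ha0 : ∀ v ∈ V, 0 ≤ a v := fun v hv => by
    have := hf.2.1 ⟨v, hv⟩
    rwa [ha] at this
  have haZ : ∀ v ∈ V, a v = 0 ↔ v ∈ Z := fun v hv => by
    rw [← hfZ ⟨v, hv⟩, ha]
  have hface := zero_face V Z hZV a ha0 haZ
  obtain ⟨z, hz⟩ := hZ
  have hzV : z ∈ convexHull ℝ (V : Set (Fin N → ℝ)) := subset_convexHull _ _ (hZV hz)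
  have hz0 : a z = 0 := (haZ z (hZV hz)).2 hz
  refine ⟨fun _ => ⟨LinearMap.toContinuousLinearMap (-a.linear), ?_⟩, ?_, ?_⟩
  · have hl : ∀ y, (LinearMap.toContinuousLinearMap (-a.linear)) (r • y) = r * (a 0 - a y) := by
      intro y
      rw [aff_lin a y]; simp
    ext x
    constructor
    · rintro ⟨y, hy, rfl⟩
      have hyV : y ∈ convexHull ℝ (V : Set (Fin N → ℝ)) :=
        convexHull_mono (Finset.coe_subset.2 hZV) hy
      refine ⟨Set.smul_mem_smul_set hyV, ?_⟩
      rintro _ ⟨y', hy', rfl⟩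
      simp only []
      rw [hl, hl, ((hface y hyV).2).2 hy]
      have := (hface y' hy').1
      exact mul_le_mul_of_nonneg_left (by linarith) hr.le
    · rintro ⟨⟨y, hyV, rfl⟩, h⟩
      refine Set.smul_mem_smul_set ((hface y hyV).2.1 ?_)
      have := h (r • z) (Set.smul_mem_smul_set hzV)
      simp only [] at this
      rw [hl, hl, hz0] at this
      have h2 := le_of_mul_le_mul_left this hr
      have := (hface y hyV).1
      linarith
  · exact ⟨r • z, Set.smul_mem_smul_set (subset_convexHull _ _ hz)⟩
  · rw [polyDim_smul _ _ hr.ne', polyDim_smul _ _ hr.ne']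
    exact dim_zero_set V Z hZV ⟨z, hz⟩ f hf hfZ

lemma hint_aux {N : ℕ} (V : Finset (Fin N → ℝ)) (hVl : ∀ v ∈ V, IsLatticePt v)
    (p q : V) (hpq : p ≠ q) (r : ℕ) (hr : 0 < r)
    (x : Fin N → ℝ)
    (hrefl : ∀ F : Set (Fin N → ℝ), IsFacet ((r : ℝ) • convexHull ℝ (V : Set (Fin N → ℝ))) F →
      ∃ u : (Fin N → ℝ) →ᵃ[ℝ] ℝ, IsIntegralOn ((r : ℝ) • convexHull ℝ (V : Set (Fin N → ℝ))) u ∧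
        ∀ f ∈ F, u f = u x + 1)
    (lt : V → ℝ) (hlt : ∀ v, 0 < lt v) (hlr : ∑ v, lt v = r)
    (hlx : ∑ v, lt v • (v : Fin N → ℝ) = x)
    (f : V → ℝ) (hf : IsMaxi (resL V) f) :
    ∃ U : (Fin N → ℝ) →ᵃ[ℝ] ℝ, IsIntegralOn (convexHull ℝ (V : Set (Fin N → ℝ))) U ∧
      ∃ t : ℝ, 0 < t ∧ (∀ v : V, U v = t * f v) ∧ (∀ v, ∃ n : ℕ, t * f v = n) ∧
        ∑ v, (t * f v) * lt v = 1 := by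
  classical
  have hr' : (0 : ℝ) < r := by exact_mod_cast hr
  set Z : Finset (Fin N → ℝ) := V.filter (fun v => ∃ hv : v ∈ V, f ⟨v, hv⟩ = 0) with hZdef
  have hZV : Z ⊆ V := Finset.filter_subset _ _
  have hfZ : ∀ v : V, f v = 0 ↔ (v : Fin N → ℝ) ∈ Z := fun v => by
    rw [hZdef, Finset.mem_filter]
    exact ⟨fun h => ⟨v.2, v.2, h⟩, fun h => h.2.2⟩
  have hZ : Z.Nonempty := by
    by_contra hE
    rw [Finset.not_nonempty_iff_eq_empty] at hE
    have hno : ∀ v : V, f v ≠ 0 := fun v h => by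
      have := (hfZ v).1 h
      rw [hE] at this; simp at this
    obtain ⟨t1, ht1⟩ := maxi_mult _ f hf (fun _ => 1) ⟨AffineMap.const ℝ _ 1, fun v => by simp⟩
      (fun v hv => absurd hv (hno v))
    have hne : (p : Fin N → ℝ) ≠ q := fun h => hpq (Subtype.ext h)
    obtain ⟨i, hi⟩ := Function.ne_iff.1 hne
    obtain ⟨t2, ht2⟩ := maxi_mult _ f hf (fun v => (v : Fin N → ℝ) i)
      ⟨(LinearMap.proj i : (Fin N → ℝ) →ₗ[ℝ] ℝ).toAffineMap, fun v => by simp⟩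
      (fun v hv => absurd hv (hno v))
    have e1 := ht1 p
    have e2 := ht1 q
    have e3 := ht2 p
    have e4 := ht2 q
    have ht : t1 ≠ 0 := by rintro rfl; simp at e1
    have : f p = f q := mul_left_cancel₀ ht (by rw [← e1, ← e2])
    rw [this] at e3
    exact hi (by rw [e3, e4])
  obtain ⟨u, huI, hu⟩ := hrefl _ (facet_aux V Z hZV hZ f hf hfZ r hr')
  obtain ⟨v0, hv0⟩ := hZ
  have hv0V := hZV hv0
  set U : (Fin N → ℝ) →ᵃ[ℝ] ℝ := (-u.linear).toAffineMap + AffineMap.const ℝ _ (u.linear v0) with hU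
  have hUx : ∀ y, U y = u.linear (v0 - y) := fun y => by simp [hU]; ring
  have hUZ : ∀ z ∈ Z, U z = 0 := by
    intro z hz
    have h1 := hu _ (Set.smul_mem_smul_set (a := (r : ℝ)) (subset_convexHull ℝ _ (Finset.mem_coe.2 hz)))
    have h2 := hu _ (Set.smul_mem_smul_set (a := (r : ℝ)) (subset_convexHull ℝ _ (Finset.mem_coe.2 hv0)))
    have h3 : (r : ℝ) * u.linear (v0 - z) = 0 := by
      rw [← smul_eq_mul, ← map_smul, smul_sub, aff_lin_sub, h1, h2, sub_self]
    rw [hUx]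
    exact (mul_eq_zero.1 h3).resolve_left hr'.ne'
  have hUI : IsIntegralOn (convexHull ℝ (V : Set (Fin N → ℝ))) U := by
    have hm : ∀ y ∈ affineSpan ℝ (convexHull ℝ (V : Set (Fin N → ℝ))),
        y + ((r : ℝ) - 1) • v0 ∈ affineSpan ℝ ((r : ℝ) • convexHull ℝ (V : Set (Fin N → ℝ))) := by
      intro y hy
      have hv0A : v0 ∈ affineSpan ℝ (convexHull ℝ (V : Set (Fin N → ℝ))) :=
        subset_affineSpan ℝ _ (subset_convexHull ℝ _ hv0V)
      have h1 := AffineSubspace.vadd_mem_of_mem_direction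
        (Submodule.smul_mem _ ((r : ℝ)⁻¹) (AffineSubspace.vsub_mem_direction hy hv0A)) hv0A
      rw [← AffineSubspace.smul_span]
      have h2 := (AffineSubspace.smul_mem_smul_iff₀ hr'.ne').2 h1
      convert h2 using 1
      simp only [vsub_eq_sub, vadd_eq_add, smul_add, smul_smul, mul_inv_cancel₀ hr'.ne']
      module
    have hlat : ∀ y, IsLatticePt y → IsLatticePt (y + ((r : ℝ) - 1) • v0) := by
      intro y hy
      have := isLat_smul ((r : ℤ) - 1) (hVl v0 hv0V)
      push_cast at this
      exact isLat_add hy this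
    intro y hy hyl
    obtain ⟨z1, h1⟩ := huI _ (hm y hy) (hlat y hyl)
    obtain ⟨z2, h2⟩ := huI _ (hm v0 (subset_affineSpan ℝ _ (subset_convexHull ℝ _ hv0V)))
      (hlat v0 (hVl v0 hv0V))
    refine ⟨z2 - z1, ?_⟩
    rw [hUx, show v0 - y = (v0 + ((r : ℝ) - 1) • v0) - (y + ((r : ℝ) - 1) • v0) by abel,
      aff_lin_sub, h1, h2]
    push_cast; ring
  have hsum : ∑ v : V, lt v * U v = 1 := by
    have e1 : ∑ v : V, lt v * U v = u.linear ((r : ℝ) • v0 - x) := by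
      rw [← hlx, ← hlr, Finset.sum_smul, ← Finset.sum_sub_distrib, map_sum]
      refine Finset.sum_congr rfl fun v _ => ?_
      rw [hUx, ← smul_sub, map_smul, smul_eq_mul]
    rw [e1, aff_lin_sub, hu _ (Set.smul_mem_smul_set (subset_convexHull ℝ _ (Finset.mem_coe.2 hv0)))]
    ring
  obtain ⟨t, ht⟩ := maxi_mult _ f hf (fun v => U v) ⟨U, fun v => rfl⟩
    (fun v hv => hUZ v ((hfZ v).1 hv))
  have hsum' : ∑ v, (t * f v) * lt v = 1 := by
    rw [← hsum]
    refine Finset.sum_congr rfl fun v _ => ?_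
    rw [ht]; ring
  have htpos : 0 < t := by
    by_contra hle
    push Not at hle
    have : ∑ v, (t * f v) * lt v ≤ 0 := Finset.sum_nonpos fun v _ =>
      mul_nonpos_of_nonpos_of_nonneg (mul_nonpos_of_nonpos_of_nonneg hle (hf.2.1 v)) (hlt v).le
    linarith
  refine ⟨U, hUI, t, htpos, ht, fun v => ?_, hsum'⟩
  obtain ⟨z, hz⟩ := hUI v (subset_affineSpan ℝ _ (subset_convexHull ℝ _ v.2)) (hVl v v.2)
  have h0 : 0 ≤ U v := by rw [ht]; exact mul_nonneg htpos.le (hf.2.1 v)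
  have hz0 : 0 ≤ z := by rw [hz] at h0; exact_mod_cast h0
  refine ⟨z.toNat, ?_⟩
  rw [← ht, hz]
  exact_mod_cast (Int.toNat_of_nonneg hz0).symm

theorem stmt0 {N d s : ℕ} (P : Set (Fin N → ℝ))
    (hP : IsLatticePolytope P) (hGor : IsGorenstein P)
    (hd : polyDim P = d) (hs : polyDeg P = s) (h : 3 * s ≤ d) :
    IsLatticePyramid P := by
  classical
  obtain ⟨V, hVne, hVl, rfl, hmin⟩ := exists_minV P hP
  obtain ⟨r, hr, x, hx, hxl, hrefl⟩ := hGor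
  by_cases hcard : V.card ≤ 1
  · obtain ⟨v, hv⟩ := hVne
    have hVv : V = {v} := by
      apply Finset.eq_singleton_iff_unique_mem.2
      exact ⟨hv, fun w hw => Finset.card_le_one.1 hcard w hw v hv⟩
    exact Or.inl ⟨v, hVl v hv, by rw [hVv]; simp⟩
  · push Not at hcard
    right
    obtain ⟨p, hp, q, hq, hpq⟩ := Finset.one_lt_card.1 hcard
    obtain ⟨lt, hlt, hlr, hlx⟩ := weights_aux V hVne r hr x hx
    have hint := hint_aux V hVl ⟨p, hp⟩ ⟨q, hq⟩ (fun h => hpq (congrArg Subtype.val h)) r hr x hrefl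
      lt hlt hlr hlx
    have hcod : polyCodeg (convexHull ℝ (V : Set (Fin N → ℝ))) ≤ r :=
      Nat.sInf_le ⟨hr, fun hh => hh x hx hxl⟩
    have hfin := finrank_resL V hVne
    rw [polyDeg] at hs
    obtain ⟨f, hf, vi, hfv, h1, h0⟩ := cone_main (resL V) ⟨AffineMap.const ℝ _ 1, fun v => by simp⟩
      (sep_aux V hmin) lt hlt r hlr (by omega)
      (fun f hf => by
        obtain ⟨U, _, t, ht, _, hn, hsum⟩ := hint f hf
        exact ⟨t, ht, hn, hsum⟩)
    obtain ⟨U, hUI, t, ht, hUv, hn, hsum⟩ := hint f hf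
    obtain ⟨v0, hv0, hne⟩ : ∃ v0 ∈ V, v0 ≠ (vi : Fin N → ℝ) := by
      by_cases hh : p = vi
      · exact ⟨q, hq, fun h' => hpq (hh.trans h'.symm)⟩
      · exact ⟨p, hp, hh⟩
    refine pyr_aux V hVl vi v0 vi.2 hv0 hne U hUI ?_ ?_
    · rw [hUv]; exact h1 t hsum
    · intro w hw hwv
      have := hUv ⟨w, hw⟩
      rw [h0 ⟨w, hw⟩ (fun h' => hwv (congrArg Subtype.val h')), mul_zero] at this
      exact this
end

section
/- Let P_1, …, P_l ⊂ ℝ^n be lattice polytopes with dim(P_i) ≥ 1 for all i, and let k_1, …, k_l be positive integers such that k_1 P_1 + ⋯ + k_l P_l is, up to a lattice translation, a reflexive polytope. Then k_1 + ⋯ + k_l ≤ 2n. -/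
open Pointwise

lemma conicCara {E : Type*} [AddCommGroup E] [Module ℝ E] [FiniteDimensional ℝ E] [DecidableEq E]
    (N : ℕ) : ∀ (T : Finset E) (c : E → ℝ), T.card ≤ N → (∀ u ∈ T, 0 ≤ c u) →
    ∃ (T' : Finset E) (c' : E → ℝ), T' ⊆ T ∧ T'.card ≤ Module.finrank ℝ E ∧
      (∀ u ∈ T', 0 ≤ c' u) ∧ ∑ u ∈ T', c' u • u = ∑ u ∈ T, c u • u := by
  induction N with
  | zero =>
    intro T c hT hc
    exact ⟨T, c, subset_rfl, by omega, hc, rfl⟩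
  | succ N ih =>
    intro T c hT hc
    by_cases h : T.card ≤ Module.finrank ℝ E
    · exact ⟨T, c, subset_rfl, h, hc, rfl⟩
    push Not at h
    have key : ∃ f : E → ℝ, ∑ e ∈ T, f e • e = 0 ∧ ∃ x ∈ T, 0 < f x := by
      obtain ⟨f, hf, x, hx, hx0⟩ := Module.exists_nontrivial_relation_of_finrank_lt_card h
      rcases lt_or_gt_of_ne hx0 with h0 | h0
      · refine ⟨fun e => - f e, ?_, x, hx, by simpa using h0⟩
        simp [neg_smul, hf]
      · exact ⟨f, hf, x, hx, h0⟩
    obtain ⟨f, hf, x, hx, hx0⟩ := key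
    obtain ⟨y, hy, hmin⟩ := Finset.exists_min_image (T.filter (fun e => 0 < f e))
      (fun e => c e / f e) ⟨x, by simp [hx, hx0]⟩
    rw [Finset.mem_filter] at hy
    obtain ⟨hyT, hy0⟩ := hy
    set t := c y / f y with ht
    have ht0 : 0 ≤ t := div_nonneg (hc y hyT) hy0.le
    have hc' : ∀ u ∈ T, 0 ≤ c u - t * f u := by
      intro u hu
      by_cases hu0 : 0 < f u
      · have := hmin u (by simp [hu, hu0])
        rw [le_div_iff₀ hu0] at this
        linarith
      · have := hc u hu
        nlinarith
    have hy' : c y - t * f y = 0 := by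
      rw [ht]; field_simp; ring
    obtain ⟨T', c', h1, h2, h3, h4⟩ := ih (T.erase y) (fun u => c u - t * f u)
      (by rw [Finset.card_erase_of_mem hyT]; omega)
      (fun u hu => hc' u (Finset.mem_of_mem_erase hu))
    refine ⟨T', c', h1.trans (Finset.erase_subset _ _), h2, h3, ?_⟩
    rw [h4, Finset.sum_erase _ (by simp only [hy', zero_smul])]
    simp only [sub_smul, mul_smul, Finset.sum_sub_distrib, ← Finset.smul_sum, hf, smul_zero, sub_zero]

lemma lemA {E : Type*} [NormedAddCommGroup E] [NormedSpace ℝ E] [FiniteDimensional ℝ E]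
    (V : Set E) (hV : V.Finite) (ε : ℝ) (hε : 0 < ε)
    (hb : ∀ u : StrongDual ℝ E, (∀ v ∈ V, u v ≤ 1) → ∀ w, ‖w‖ < ε → u w ≤ 1) :
    ∃ S : Finset (StrongDual ℝ E), S.card ≤ 2 * Module.finrank ℝ E ∧
      (∀ u ∈ S, (∀ v ∈ V, u v ≤ 1) ∧ Submodule.span ℝ {v ∈ V | u v = 1} = ⊤) ∧
      ∀ w, (∀ u ∈ S, u w ≤ 0) → w = 0 := by
  classical
  set U : Set (StrongDual ℝ E) :=
    {u | (∀ v ∈ V, u v ≤ 1) ∧ Submodule.span ℝ {v ∈ V | u v = 1} = ⊤} with hU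
  set Q : Set (StrongDual ℝ E) := {u | ∀ v ∈ V, u v ≤ 1} with hQ
  have hUfin : U.Finite := by
    apply Set.Finite.of_finite_image (f := fun u => {v ∈ V | u v = 1})
    · apply hV.finite_subsets.subset
      rintro _ ⟨u, -, rfl⟩
      exact fun v hv => hv.1
    · intro u hu u' hu' h
      have : (u : E →ₗ[ℝ] ℝ) = u' := by
        apply LinearMap.ext_on hu.2
        intro v hv
        have h2 : v ∈ {v ∈ V | u' v = 1} := by
          have h' : {v ∈ V | u v = 1} = {v ∈ V | u' v = 1} := h
          rw [← h']; exact hv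
        simp [hv.2, h2.2]
      exact ContinuousLinearMap.coe_injective this
  have hconv : Convex ℝ Q := by
    intro u hu u' hu' a b ha hb hab v hv
    have h1 := hu v hv
    have h2 := hu' v hv
    simp only [_root_.add_apply, _root_.smul_apply, smul_eq_mul]
    nlinarith
  have hclosed : IsClosed Q := by
    have : Q = ⋂ v ∈ V, {u : StrongDual ℝ E | u v ≤ 1} := by ext; simp [hQ]
    rw [this]
    refine isClosed_biInter fun v _ => isClosed_le ?_ continuous_const
    exact (ContinuousLinearMap.apply ℝ ℝ v).continuous
  have hbdd : Q ⊆ Metric.closedBall 0 (2 / ε) := by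
    intro u hu
    rw [mem_closedBall_zero_iff]
    apply ContinuousLinearMap.opNorm_le_bound _ (by positivity)
    intro w
    by_cases hw : w = 0
    · simp [hw]
    have hw0 : 0 < ‖w‖ := norm_pos_iff.2 hw
    have hn : ‖(ε / (2 * ‖w‖)) • w‖ < ε := by
      rw [norm_smul, Real.norm_of_nonneg (by positivity)]
      field_simp; linarith
    have h1 := hb u hu _ hn
    have h2 := hb u hu (-((ε / (2 * ‖w‖)) • w)) (by rwa [norm_neg])
    simp only [map_neg, map_smul, smul_eq_mul] at h1 h2
    rw [Real.norm_eq_abs]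
    have : |ε / (2 * ‖w‖) * u w| ≤ 1 := abs_le.2 ⟨by linarith, h1⟩
    rw [abs_mul, abs_of_nonneg (by positivity : 0 ≤ ε / (2 * ‖w‖)), div_mul_eq_mul_div, div_le_one (by positivity)] at this
    rw [div_mul_eq_mul_div, le_div_iff₀ hε]
    linarith
  have hcomp : IsCompact Q := (isCompact_closedBall _ _).of_isClosed_subset hclosed hbdd
  -- bounds on V
  have hM : ∃ M : ℝ, 0 < M ∧ ∀ v ∈ V, ‖v‖ ≤ M := by
    obtain ⟨M, hM⟩ := hV.isBounded.exists_norm_le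
    exact ⟨max M 1, by positivity, fun v hv => (hM v hv).trans (le_max_left _ _)⟩
  obtain ⟨M, hM0, hM⟩ := hM
  have habs : ∀ f : StrongDual ℝ E, ∃ δ : ℝ, 0 < δ ∧ δ • f ∈ Q := by
    intro f
    refine ⟨1 / ((‖f‖ + 1) * M), by positivity, ?_⟩
    intro v hv
    have h1 : f v ≤ ‖f‖ * ‖v‖ := (le_abs_self _).trans (f.le_opNorm v)
    have h2 : f v ≤ (‖f‖ + 1) * M := by
      have := mul_le_mul_of_nonneg_left (hM v hv) (norm_nonneg f)
      nlinarith
    simp only [_root_.smul_apply, smul_eq_mul]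
    rw [div_mul_eq_mul_div, div_le_one (by positivity)]
    linarith
  have hext : Q.extremePoints ℝ ⊆ U := by
    intro u hu
    refine ⟨hu.1, ?_⟩
    by_contra hne
    obtain ⟨f, hf0, hf⟩ := Submodule.exists_le_ker_of_lt_top _ (lt_top_iff_ne_top.2 hne)
    set g : StrongDual ℝ E := LinearMap.toContinuousLinearMap f with hg
    have hgf : ∀ v, g v = f v := fun v => rfl
    -- find δ
    have hδ : ∃ δ > 0, ∀ v ∈ V, u v ≠ 1 → δ * |f v| ≤ 1 - u v := by
      have : ∀ᶠ δ in nhdsWithin (0:ℝ) (Set.Ioi 0), ∀ v ∈ V, u v ≠ 1 → δ * |f v| ≤ 1 - u v := by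
        rw [Filter.eventually_all_finite hV]
        intro v hv
        by_cases h1 : u v = 1
        · simp [h1]
        have hlt : 0 < 1 - u v := by
          have := lt_of_le_of_ne (hu.1 v hv) h1
          linarith
        have : Filter.Tendsto (fun δ : ℝ => δ * |f v|) (nhdsWithin 0 (Set.Ioi 0)) (nhds (0 * |f v|)) :=
          ((continuous_id.mul continuous_const).tendsto 0).mono_left nhdsWithin_le_nhds
        rw [zero_mul] at this
        filter_upwards [this.eventually (gt_mem_nhds hlt)] with δ h _
        exact h.le
      obtain ⟨δ, h1, h2⟩ := (this.and self_mem_nhdsWithin).exists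
      exact ⟨δ, h2, h1⟩
    obtain ⟨δ, hδ0, hδ⟩ := hδ
    have hmem : ∀ s : ℝ, |s| = δ → u + s • g ∈ Q := by
      intro s hs v hv
      simp only [_root_.add_apply, _root_.smul_apply, smul_eq_mul, hgf]
      by_cases h1 : u v = 1
      · have : f v = 0 := hf (Submodule.subset_span ⟨hv, h1⟩)
        simp [this, h1]
      · have h2 := hδ v hv h1
        have h3 : s * f v ≤ |s * f v| := le_abs_self _
        rw [abs_mul, hs] at h3
        linarith
    have heq := hu.2 (hmem δ (abs_of_pos hδ0)) (hmem (-δ) (by rw [abs_neg, abs_of_pos hδ0]))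
      ⟨1/2, 1/2, by norm_num, by norm_num, by norm_num, by module⟩
    have : g = 0 := by
      have h : δ • g = 0 := by simpa using heq
      exact (smul_eq_zero.1 h).resolve_left hδ0.ne'
    apply hf0
    ext v
    rw [← hgf, this]; rfl
  have hQsub : Q ⊆ convexHull ℝ U := by
    rw [← closure_convexHull_extremePoints hcomp hconv]
    exact closure_minimal (convexHull_mono hext) (hUfin.isClosed_convexHull ℝ)
  have hspan : Submodule.span ℝ U = ⊤ := by
    rw [eq_top_iff]
    intro f _
    obtain ⟨δ, hδ, hf⟩ := habs f
    have := convexHull_min (s := U) (t := (Submodule.span ℝ U : Set (StrongDual ℝ E))) Submodule.subset_span (Submodule.convex _) (hQsub hf)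
    exact (Submodule.smul_mem_iff _ hδ.ne').1 this
  have hfr : Module.finrank ℝ (StrongDual ℝ E) = Module.finrank ℝ E := by
    rw [← LinearEquiv.finrank_eq (LinearMap.toContinuousLinearMap (𝕜 := ℝ) (E := E) (F' := ℝ))]
    exact Subspace.dual_finrank_eq
  obtain ⟨b, hbU, hbs, hbli⟩ := exists_linearIndependent ℝ U
  have hbfin : b.Finite := hUfin.subset hbU
  set B := hbfin.toFinset with hB
  have hBcard : B.card ≤ Module.finrank ℝ E := by
    rw [← hfr]
    have hBli : LinearIndependent ℝ ((↑) : B → StrongDual ℝ E) := by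
      have : (B : Set (StrongDual ℝ E)) = b := by simp [hB]
      have h2 : LinearIndepOn ℝ id (B : Set (StrongDual ℝ E)) := by rw [this]; exact hbli
      exact h2
    simpa using hBli.fintype_card_le_finrank
  obtain ⟨δ, hδ0, hδ⟩ := habs (-∑ u ∈ B, u)
  have hmem := hQsub hδ
  have hmem' : δ • (-∑ u ∈ B, u) ∈ convexHull ℝ (hUfin.toFinset : Set (StrongDual ℝ E)) := by
    simpa using hmem
  rw [Finset.mem_convexHull'] at hmem'
  obtain ⟨c, hc0, -, hc⟩ := hmem'
  obtain ⟨T, c', hT, hTc, hc'0, hc'⟩ := conicCara _ hUfin.toFinset c le_rfl hc0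
  refine ⟨B ∪ T, ?_, ?_, ?_⟩
  · have := Finset.card_union_le B T
    omega
  · intro u hu
    rcases Finset.mem_union.1 hu with h | h
    · exact hbU (by simpa [hB] using h)
    · exact hUfin.mem_toFinset.1 (hT h)
  · intro w hw
    have h1 : ∀ u ∈ B, u w ≤ 0 := fun u hu => hw u (Finset.mem_union_left _ hu)
    have h2 : ∑ u ∈ T, c' u * u w ≤ 0 := Finset.sum_nonpos fun u hu =>
      mul_nonpos_of_nonneg_of_nonpos (hc'0 u hu) (hw u (Finset.mem_union_right _ hu))
    have h3 : ∑ u ∈ T, c' u * u w = δ * (-∑ u ∈ B, u w) := by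
      have := congrArg (fun f : StrongDual ℝ E => f w) (hc'.trans hc)
      simpa [_root_.sum_apply] using this
    have h4 : 0 ≤ ∑ u ∈ B, u w := by
      by_contra hneg
      push Not at hneg
      have := mul_pos hδ0 (neg_pos.2 hneg)
      linarith
    have h5 : ∀ u ∈ B, u w = 0 :=
      (Finset.sum_eq_zero_iff_of_nonpos h1).1 (le_antisymm (Finset.sum_nonpos h1) h4)
    have h6 : ∀ f : StrongDual ℝ E, f w = 0 := by
      intro f
      have hf : f ∈ Submodule.span ℝ b := by rw [hbs, hspan]; trivial
      have : Submodule.span ℝ b ≤ LinearMap.ker ((ContinuousLinearMap.apply ℝ ℝ w : StrongDual ℝ E →L[ℝ] ℝ) : StrongDual ℝ E →ₗ[ℝ] ℝ) := by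
        rw [Submodule.span_le]
        intro u hu
        exact h5 u (by simpa [hB] using hu)
      exact this hf
    by_contra hw0
    obtain ⟨g, hg⟩ := exists_dual_vector ℝ w (norm_ne_zero_iff.2 hw0)
    have := h6 g
    rw [hg.2] at this
    exact hw0 (by simpa using this)

lemma lemB {n : ℕ} (W : Set (Fin n → ℝ)) (hW : W.Finite) (x : Fin n → ℝ)
    (hx : x ∈ intrinsicInterior ℝ (convexHull ℝ W)) (hxl : IsLatticePt x)
    (href : ∀ F : Set (Fin n → ℝ), IsFacet (convexHull ℝ W) F →
      ∃ u : (Fin n → ℝ) →ᵃ[ℝ] ℝ, IsIntegralOn (convexHull ℝ W) u ∧ ∀ f ∈ F, u f = u x + 1) :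
    ∃ S : Finset (StrongDual ℝ (affineSpan ℝ (convexHull ℝ W)).direction), S.card ≤ 2 * n ∧
      (∀ u ∈ S, (∀ w : (affineSpan ℝ (convexHull ℝ W)).direction, x + (w : Fin n → ℝ) ∈ convexHull ℝ W → u w ≤ 1) ∧
        ∀ w : (affineSpan ℝ (convexHull ℝ W)).direction, IsLatticePt (w : Fin n → ℝ) → ∃ z : ℤ, u w = z) ∧
      ∀ w, (∀ u ∈ S, u w ≤ 0) → w = 0 := by
  classical
  set Q := convexHull ℝ W with hQ
  set A := affineSpan ℝ Q with hA
  set L := A.direction with hL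
  have hxQ : x ∈ Q := intrinsicInterior_subset hx
  have hxA : x ∈ A := subset_affineSpan ℝ Q hxQ
  -- the ball
  obtain ⟨ε, hε, hball⟩ : ∃ ε > 0, ∀ w : L, ‖w‖ < ε → x + (w : Fin n → ℝ) ∈ Q := by
    rw [mem_intrinsicInterior] at hx
    obtain ⟨y, hy, rfl⟩ := hx
    rw [mem_interior_iff_mem_nhds, Metric.mem_nhds_iff] at hy
    obtain ⟨ε, hε, hy⟩ := hy
    refine ⟨ε, hε, fun w hw => ?_⟩
    have hm : (y : Fin n → ℝ) + (w : Fin n → ℝ) ∈ A := by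
      have := AffineSubspace.vadd_mem_of_mem_direction w.2 hxA
      rwa [vadd_eq_add, add_comm] at this
    have : (⟨(y : Fin n → ℝ) + (w : Fin n → ℝ), hm⟩ : A) ∈ Metric.ball y ε := by
      rw [Metric.mem_ball, Subtype.dist_eq]
      simpa [dist_eq_norm] using hw
    exact hy this
  set V : Set L := {v : L | x + (v : Fin n → ℝ) ∈ W} with hVdef
  have hVfin : V.Finite := by
    apply Set.Finite.preimage _ hW
    intro a _ b _ hab
    exact Subtype.ext (add_left_cancel hab)
  -- extension of functionals
  have hextend : ∀ u : StrongDual ℝ L, ∃ g : StrongDual ℝ (Fin n → ℝ), ∀ w : L, g w = u w := by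
    intro u
    obtain ⟨g, hg⟩ := LinearMap.exists_extend (u : L →ₗ[ℝ] ℝ)
    refine ⟨LinearMap.toContinuousLinearMap g, fun w => ?_⟩
    exact congrArg (fun f : L →ₗ[ℝ] ℝ => f w) hg
  have hsubL : ∀ y ∈ Q, y - x ∈ L := fun y hy =>
    AffineSubspace.vsub_mem_direction (subset_affineSpan ℝ Q hy) hxA
  have hQle : ∀ u : StrongDual ℝ L, (∀ v ∈ V, u v ≤ 1) →
      ∀ w : L, x + (w : Fin n → ℝ) ∈ Q → u w ≤ 1 := by
    intro u hu w hw
    obtain ⟨g, hg⟩ := hextend u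
    have hsub : Q ⊆ {y | g y ≤ g x + 1} := by
      apply convexHull_min
      · intro y hy
        have hyL := hsubL y (subset_convexHull ℝ W hy)
        have := hu ⟨y - x, hyL⟩ (by simpa [hVdef] using hy)
        rw [← hg, map_sub] at this
        simp only [Set.mem_ofPred_eq]; linarith
      · exact convex_halfSpace_le (g : (Fin n → ℝ) →ₗ[ℝ] ℝ).isLinear _
    have := hsub hw
    simp only [Set.mem_ofPred_eq, map_add] at this
    rw [hg] at this
    linarith
  obtain ⟨S, hScard, hS, hpos⟩ := lemA V hVfin ε hε
    (fun u hu w hw => hQle u hu w (hball w hw))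
  have hLn : Module.finrank ℝ L ≤ n := by
    simpa using Submodule.finrank_le L
  refine ⟨S, by omega, fun u hu => ⟨hQle u (hS u hu).1, ?_⟩, hpos⟩
  obtain ⟨huV, huspan⟩ := hS u hu
  have hLpos : 0 < Module.finrank ℝ L := by
    have := Finset.card_pos.2 ⟨u, hu⟩
    omega
  obtain ⟨v0, hv0V, hv01⟩ : ({v ∈ V | u v = 1} : Set L).Nonempty := by
    by_contra hne
    rw [Set.not_nonempty_iff_eq_empty] at hne
    rw [hne, Submodule.span_empty] at huspan
    have : Module.finrank ℝ L = 0 := by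
      rw [← finrank_top ℝ L, ← huspan, finrank_bot]
    omega
  obtain ⟨g, hg⟩ := hextend u
  set F : Set (Fin n → ℝ) := {y ∈ Q | g y = g x + 1} with hF
  have hQg : ∀ y ∈ Q, g y ≤ g x + 1 := by
    intro y hy
    have := hQle u huV ⟨y - x, hsubL y hy⟩ (by simpa using hy)
    rw [← hg, map_sub] at this
    linarith
  have htight : ∀ v ∈ V, u v = 1 → x + (v : Fin n → ℝ) ∈ F := by
    intro v hv h1
    refine ⟨subset_convexHull ℝ W hv, ?_⟩
    rw [map_add, hg, h1]
  have hy0 := htight v0 hv0V hv01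
  have hfacet : IsFacet Q F := by
    refine ⟨?_, ⟨_, hy0⟩, ?_⟩
    · intro _
      refine ⟨g, ?_⟩
      ext y
      constructor
      · rintro ⟨hy, hy1⟩
        exact ⟨hy, fun z hz => hy1 ▸ hQg z hz⟩
      · rintro ⟨hy, hy1⟩
        refine ⟨hy, le_antisymm (hQg y hy) ?_⟩
        have := hy1 _ hy0.1
        rwa [hy0.2] at this
    · unfold polyDim
      set D := (affineSpan ℝ F).direction with hD
      have hFQ : F ⊆ Q := fun y hy => hy.1
      have hDL : D ≤ L := AffineSubspace.direction_le (affineSpan_mono ℝ hFQ)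
      have hDker : D ≤ LinearMap.ker (g : (Fin n → ℝ) →ₗ[ℝ] ℝ) := by
        rw [hD, direction_affineSpan, vectorSpan_def, Submodule.span_le]
        rintro _ ⟨a, ha, b, hb, rfl⟩
        simp [ha.2, hb.2]
      have hlt : D < L := by
        refine lt_of_le_of_ne hDL fun h => ?_
        have h1 : (v0 : Fin n → ℝ) ∈ D := by rw [h]; exact v0.2
        have h2 : g v0 = 0 := hDker h1
        rw [hg, hv01] at h2
        norm_num at h2
      have h1 := Submodule.finrank_lt_finrank_of_lt hlt
      have hle : L ≤ D ⊔ Submodule.span ℝ {(v0 : Fin n → ℝ)} := by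
        have : (⊤ : Submodule ℝ L) ≤ (D ⊔ Submodule.span ℝ {(v0 : Fin n → ℝ)}).comap L.subtype := by
          rw [← huspan, Submodule.span_le]
          rintro v ⟨hv, hv1⟩
          have h2 : (x + (v : Fin n → ℝ)) -ᵥ (x + (v0 : Fin n → ℝ)) ∈ D :=
            AffineSubspace.vsub_mem_direction (subset_affineSpan ℝ F (htight v hv hv1))
              (subset_affineSpan ℝ F hy0)
          have h3 : (v : Fin n → ℝ) = ((x + (v : Fin n → ℝ)) -ᵥ (x + (v0 : Fin n → ℝ))) + v0 := by
            simp
          show (v : Fin n → ℝ) ∈ D ⊔ Submodule.span ℝ {(v0 : Fin n → ℝ)}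
          rw [h3]
          exact Submodule.add_mem_sup h2 (Submodule.mem_span_singleton_self _)
        intro w hw
        exact this (Submodule.mem_top : (⟨w, hw⟩ : L) ∈ ⊤)
      have h2 := Submodule.finrank_mono hle
      have h3 := Submodule.finrank_add_le_finrank_add_finrank D (Submodule.span ℝ {(v0 : Fin n → ℝ)})
      have h4 : Module.finrank ℝ (Submodule.span ℝ {(v0 : Fin n → ℝ)}) ≤ 1 := by
        simpa using finrank_span_le_card (R := ℝ) ({(v0 : Fin n → ℝ)} : Set (Fin n → ℝ))
      show Module.finrank ℝ D + 1 = Module.finrank ℝ L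
      omega
  obtain ⟨a, haint, ha⟩ := href F hfacet
  have hau : ∀ w : L, a.linear w = u w := by
    intro w
    have : a.linear.comp L.subtype = (u : L →ₗ[ℝ] ℝ) := by
      apply LinearMap.ext_on huspan
      rintro v ⟨hv, hv1⟩
      have h1 := ha _ (htight v hv hv1)
      have h2 := a.map_vadd x (v : Fin n → ℝ)
      rw [vadd_eq_add, vadd_eq_add, add_comm (v : Fin n → ℝ) x, h1] at h2
      simp only [LinearMap.comp_apply, Submodule.subtype_apply, ContinuousLinearMap.coe_coe, hv1]
      linarith
    exact congrArg (fun f : L →ₗ[ℝ] ℝ => f w) this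
  intro w hw
  obtain ⟨z1, hz1⟩ := haint x hxA hxl
  have hm : (w : Fin n → ℝ) +ᵥ x ∈ A := AffineSubspace.vadd_mem_of_mem_direction w.2 hxA
  obtain ⟨z2, hz2⟩ := haint _ hm (by
    intro i
    obtain ⟨p, hp⟩ := hw i
    obtain ⟨q, hq⟩ := hxl i
    exact ⟨p + q, by simp [hp, hq]⟩)
  refine ⟨z2 - z1, ?_⟩
  rw [a.map_vadd, hau, vadd_eq_add] at hz2
  push_cast
  linarith

theorem stmt2 {n l : ℕ} (P : Fin l → Set (Fin n → ℝ)) (k : Fin l → ℕ)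
    (hP : ∀ i, IsLatticePolytope (P i)) (hdim : ∀ i, 1 ≤ polyDim (P i))
    (hk : ∀ i, 1 ≤ k i)
    (href : ∃ t : Fin n → ℝ, IsLatticePt t ∧
      IsReflexivePolytope ((fun x => x + t) '' (∑ i, (k i : ℝ) • P i))) :
    (∑ i, k i) ≤ 2 * n := by
  classical
  obtain ⟨t, -, x, hx, hxl, href⟩ := href
  choose V hVne hVl hPV using hP
  have hWeq : ((fun x => x + t) '' (∑ i, (k i : ℝ) • P i)) =
      convexHull ℝ ((fun x => x + t) '' (∑ i, (k i : ℝ) • (V i : Set (Fin n → ℝ)))) := by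
    have h1 : (∑ i, (k i : ℝ) • P i) = convexHull ℝ (∑ i, (k i : ℝ) • (V i : Set (Fin n → ℝ))) := by
      rw [convexHull_sum]
      refine Finset.sum_congr rfl fun i _ => ?_
      rw [convexHull_smul, hPV i]
    rw [h1]
    have := AffineMap.image_convexHull (𝕜 := ℝ) ((AffineEquiv.constVAdd ℝ (Fin n → ℝ) t).toAffineMap)
      (∑ i, (k i : ℝ) • (V i : Set (Fin n → ℝ)))
    simpa [add_comm] using this
  have hWfin : ((fun x => x + t) '' (∑ i, (k i : ℝ) • (V i : Set (Fin n → ℝ)))).Finite := by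
    apply Set.Finite.image
    have : (∑ i, (k i : ℝ) • (V i : Set (Fin n → ℝ))) =
        ((∑ i, (k i : ℝ) • V i : Finset (Fin n → ℝ)) : Set (Fin n → ℝ)) := by
      push_cast; rfl
    rw [this]
    exact Finset.finite_toSet _
  set W := ((fun x => x + t) '' (∑ i, (k i : ℝ) • (V i : Set (Fin n → ℝ)))) with hW
  have hmemQ : ∀ q : Fin l → Fin n → ℝ, (∀ i, q i ∈ P i) →
      (∑ i, (k i : ℝ) • q i) + t ∈ convexHull ℝ W := by
    intro q hq
    rw [← hWeq]
    refine ⟨_, ?_, rfl⟩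
    exact Set.finsetSum_mem_finsetSum _ _ _ fun i _ => Set.smul_mem_smul_set (hq i)
  have hxQ : x ∈ (fun x => x + t) '' (∑ i, (k i : ℝ) • P i) := intrinsicInterior_subset hx
  obtain ⟨y, hy, hyx⟩ := hxQ
  obtain ⟨y', hy', hy'y⟩ := Set.mem_finsetSum (t := Finset.univ) (f := fun i => (k i : ℝ) • P i) (a := y) |>.1 hy
  have hp : ∀ i, ∃ p ∈ P i, (k i : ℝ) • p = y' i := fun i => hy' (Finset.mem_univ i)
  choose p hpP hpy using hp
  have hxp : x = (∑ i, (k i : ℝ) • p i) + t := by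
    rw [← hyx, ← hy'y]
    simp [hpy]
  rw [hWeq] at hx href
  have hlB := lemB W hWfin x hx hxl href
  set A := affineSpan ℝ (convexHull ℝ W) with hA
  set L := A.direction with hL
  obtain ⟨S, hScard, hS, hpos⟩ := hlB
  have hVP : ∀ i, ∀ v ∈ V i, v ∈ P i := fun i v hv => by
    rw [hPV i]; exact subset_convexHull ℝ _ hv
  -- differences lie in L
  have hdiff : ∀ i, ∀ v ∈ P i, ∀ v' ∈ P i, v - v' ∈ L := by
    intro i v hv v' hv'
    have h1 := hmemQ (Function.update p i v) (fun j => by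
      by_cases h : j = i
      · subst h; simpa using hv
      · simpa [h] using hpP j)
    have h2 := hmemQ (Function.update p i v') (fun j => by
      by_cases h : j = i
      · subst h; simpa using hv'
      · simpa [h] using hpP j)
    have h3 := AffineSubspace.vsub_mem_direction (subset_affineSpan ℝ _ h1) (subset_affineSpan ℝ _ h2)
    have h4 : ((∑ j, (k j : ℝ) • Function.update p i v j) + t) -ᵥ
        ((∑ j, (k j : ℝ) • Function.update p i v' j) + t) = (k i : ℝ) • (v - v') := by
      rw [vsub_eq_sub, add_sub_add_right_eq_sub, ← Finset.sum_sub_distrib,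
        Finset.sum_eq_single i]
      · simp [smul_sub]
      · intro j _ hj; simp [hj]
      · simp
    rw [h4] at h3
    have hk0 : (k i : ℝ) ≠ 0 := by have := hk i; positivity
    exact (Submodule.smul_mem_iff _ hk0).1 h3
  -- extension
  have hextend : ∀ u : StrongDual ℝ L, ∃ g : (Fin n → ℝ) →ₗ[ℝ] ℝ, ∀ w : L, g w = u w := by
    intro u
    obtain ⟨g, hg⟩ := LinearMap.exists_extend (u : L →ₗ[ℝ] ℝ)
    exact ⟨g, fun w => congrArg (fun f : L →ₗ[ℝ] ℝ => f w) hg⟩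
  choose g hg using hextend
  have hmax : ∀ (u : StrongDual ℝ L) (i : Fin l), ∃ m ∈ V i, ∀ v ∈ V i, g u v ≤ g u m :=
    fun u i => Finset.exists_max_image (V i) (g u) (hVne i)
  choose m hmV hm using hmax
  have hupper : ∀ u ∈ S, ∑ i, (k i : ℝ) * (g u (m u i) - g u (p i)) ≤ 1 := by
    intro u hu
    have hsum : (∑ i, (k i : ℝ) • (m u i - p i)) ∈ L :=
      Submodule.sum_mem _ fun i _ => Submodule.smul_mem _ _ (hdiff i _ (hVP i _ (hmV u i)) _ (hpP i))
    have h1 := (hS u hu).1 ⟨_, hsum⟩ (by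
      have := hmemQ (m u) (fun i => hVP i _ (hmV u i))
      convert this using 1
      rw [hxp]
      simp only [smul_sub, Finset.sum_sub_distrib]
      abel)
    rw [← hg] at h1
    simpa using h1
  have hlower : ∀ i, 1 ≤ ∑ u ∈ S, (g u (m u i) - g u (p i)) := by
    intro i
    have hsub : P i ⊆ {q | (∑ u ∈ S, g u) q ≤ ∑ u ∈ S, g u (m u i) - 1} := by
      nth_rewrite 1 [hPV i]
      apply convexHull_min
      · intro v hv
        have hv : v ∈ V i := hv
        have hint : ∀ u ∈ S, ∃ z : ℤ, g u (m u i) - g u v = z := by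
          intro u hu
          obtain ⟨z, hz⟩ := (hS u hu).2 ⟨m u i - v, hdiff i _ (hVP i _ (hmV u i)) _ (hVP i v hv)⟩ (by
            intro j
            obtain ⟨a, ha⟩ := hVl i _ (hmV u i) j
            obtain ⟨b, hb⟩ := hVl i _ hv j
            exact ⟨a - b, by simp [ha, hb]⟩)
          refine ⟨z, ?_⟩
          rw [← hz, ← hg, map_sub]
        have hnn : ∀ u ∈ S, 0 ≤ g u (m u i) - g u v := fun u _ => sub_nonneg.2 (hm u i v hv)
        obtain ⟨u0, hu0, hu0pos⟩ : ∃ u ∈ S, 0 < g u (m u i) - g u v := by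
          by_contra hcon
          push Not at hcon
          have hsing : ∀ v' ∈ V i, v' = v := by
            intro v' hv'
            have := hpos ⟨v' - v, hdiff i _ (hVP i _ hv') _ (hVP i v hv)⟩ (by
              intro u hu
              rw [← hg, map_sub]
              have h1 := hcon u hu
              have h2 := hm u i v' hv'
              linarith)
            have h := congrArg Subtype.val this
            exact sub_eq_zero.1 h
          have hPs : P i = {v} := by
            have : V i = {v} := Finset.eq_singleton_iff_unique_mem.2 ⟨hv, hsing⟩
            rw [hPV i, this]
            simp
          have h1 := hdim i
          rw [hPs] at h1
          simp [polyDim, direction_affineSpan] at h1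
        have h1 : 1 ≤ g u0 (m u0 i) - g u0 v := by
          obtain ⟨z, hz⟩ := hint u0 hu0
          rw [hz] at hu0pos ⊢
          have : 0 < z := by exact_mod_cast hu0pos
          exact_mod_cast this
        have h2 := Finset.single_le_sum hnn hu0
        rw [Finset.sum_sub_distrib] at h2
        simp only [Set.mem_ofPred_eq, LinearMap.sum_apply]
        linarith
      · exact convex_halfSpace_le (LinearMap.isLinear _) _
    have := hsub (hpP i)
    simp only [Set.mem_ofPred_eq, LinearMap.sum_apply] at this
    rw [Finset.sum_sub_distrib]
    linarith
  have hfinal : ((∑ i, k i : ℕ) : ℝ) ≤ S.card := by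
    calc ((∑ i, k i : ℕ) : ℝ) = ∑ i, (k i : ℝ) * 1 := by push_cast; simp
      _ ≤ ∑ i, (k i : ℝ) * ∑ u ∈ S, (g u (m u i) - g u (p i)) :=
        Finset.sum_le_sum fun i _ => mul_le_mul_of_nonneg_left (hlower i) (Nat.cast_nonneg _)
      _ = ∑ u ∈ S, ∑ i, (k i : ℝ) * (g u (m u i) - g u (p i)) := by
        simp only [Finset.mul_sum]
        exact Finset.sum_comm
      _ ≤ ∑ u ∈ S, (1 : ℝ) := Finset.sum_le_sum hupper
      _ = S.card := by simp
  have : ∑ i, k i ≤ S.card := by exact_mod_cast hfinal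
  omega
end
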